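/- Let b ≥ 2 and define S_b(A) = {(b^n mod n)/n : n ∈ A} for A = {pq : p, q primes, p > b^q}, with A_N = A ∩ [1,N]. Then the star discrepancy of the finite sequence S_b(A_N) satisfies D*(S_b(A_N)) = O(1/log log log N) as N → ∞. -/

import Mathlib

open scoped Classical in
/-- Star discrepancy of the finite sequence `(f n)ic indexed by `n ∈ A`. -/
noncomputable def starDiscOn (A : Finset ℕ) (f : ℕ → ℝ) : ℝ :=
  ⨆ r : Set.Ioc (0 : ℝ) 1,
    |((A.filter fun n => f n ≤ (r : ℝ)).card : ℝ) / A.card - (r : ℝ)|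

open scoped Classical in
/-- `A_N` : products `pq` of primes with `p > b^q`, below `N`. -/
noncomputable def setAN (b N : ℕ) : Finset ℕ :=
  (Finset.Icc 1 N).filter fun n =>
    ∃ p q : ℕ, p.Prime ∧ q.Prime ∧ b ^ q < p ∧ n = p * q

section Helpers
open Finset

/-- the sieve support -/
def sqf (R k : ℕ) : Finset ℕ := (Icc 1 R).filter (fun l => Squarefree l ∧ l.Coprime k)

noncomputable def sV (R k : ℕ) : ℝ := ∑ l ∈ sqf R k, (1:ℝ)/l

lemma sum_inv_sq_le' (R : ℕ) : ∑ m ∈ Icc 1 R, (1:ℝ) / (m:ℝ)^2 ≤ 2 := by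
  have key : ∀ n : ℕ, ∑ m ∈ Icc 1 (n+1), (1:ℝ) / (m:ℝ)^2 ≤ 2 - 1/(n+1) := by
    intro n
    induction n with
    | zero => norm_num
    | succ n ih =>
      rw [Finset.sum_Icc_succ_top (by omega)]
      have : (1:ℝ)/((n+1+1:ℕ):ℝ)^2 ≤ 1/((n:ℝ)+1) - 1/((n:ℝ)+1+1) := by
        push_cast
        have h1 : (0:ℝ) < n+1 := by positivity
        have h2 : (0:ℝ) < n+1+1 := by positivity
        rw [div_sub_div _ _ h1.ne' h2.ne', div_le_div_iff₀ (by positivity) (by positivity)]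
        nlinarith
      push_cast at *
      linarith
  rcases R with _ | n
  · simp
  · have := key n
    have h : (0:ℝ) ≤ 1/(n+1) := by positivity
    linarith

lemma harm_le (R : ℕ) : ∑ n ∈ Icc 1 R, (1:ℝ)/n ≤ 2 * sV R 1 := by
  classical
  have h1 : ∑ n ∈ Icc 1 R, (1:ℝ)/n ≤ ∑ x ∈ (Icc 1 R) ×ˢ (sqf R 1), (1:ℝ)/((x.1:ℝ)^2 * x.2) := by
    have hsub : Icc 1 R ⊆ ((Icc 1 R) ×ˢ (sqf R 1)).image (fun x => x.1^2 * x.2) ∪ ∅ := by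
      intro n hn
      rw [mem_Icc] at hn
      obtain ⟨a, b, ha, hb, hab, hsq⟩ := Nat.sq_mul_squarefree_of_pos (show 0 < n by omega)
      rw [union_empty, mem_image]
      refine ⟨(b, a), ?_, hab⟩
      simp only [mem_product, mem_Icc, sqf, mem_filter, Nat.coprime_one_right_eq_true]
      have hb2 : b ≤ b^2 := Nat.le_self_pow (by norm_num) b
      have : b ^ 2 * a ≤ R := hab ▸ hn.2
      refine ⟨⟨hb, ?_⟩, ⟨ha, ?_⟩, hsq, by simp⟩ <;> nlinarith [Nat.pos_of_ne_zero (pow_ne_zero 2 hb.ne')]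
    calc ∑ n ∈ Icc 1 R, (1:ℝ)/n ≤ ∑ n ∈ (((Icc 1 R) ×ˢ (sqf R 1)).image (fun x => x.1^2 * x.2) : Finset ℕ), (1:ℝ)/(n:ℝ) := by
          apply sum_le_sum_of_subset_of_nonneg
          · simpa using hsub
          · intros; positivity
      _ ≤ ∑ x ∈ (Icc 1 R) ×ˢ (sqf R 1), (1:ℝ)/((x.1^2 * x.2 : ℕ):ℝ) := by
          apply sum_image_le_of_nonneg
          intros; positivity
      _ = _ := by push_cast; rfl
  refine h1.trans ?_
  rw [sum_product]
  have : ∀ m ∈ Icc 1 R, ∑ l ∈ sqf R 1, (1:ℝ)/((m:ℝ)^2 * l) = 1/(m:ℝ)^2 * sV R 1 := by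
    intro m _
    rw [sV, mul_sum]
    refine sum_congr rfl fun l _ => by rw [div_mul_div_comm, one_mul]
  rw [sum_congr rfl this, ← sum_mul]
  apply mul_le_mul_of_nonneg_right (sum_inv_sq_le' R)
  exact sum_nonneg fun l _ => by positivity

lemma sV_one_le (R k : ℕ) (hk : 1 ≤ k) : sV R 1 ≤ (1 + Real.log k) * sV R k := by
  classical
  have h1 : sV R 1 ≤ ∑ x ∈ (Icc 1 k) ×ˢ (sqf R k), (1:ℝ)/((x.1:ℝ) * x.2) := by
    have hsub : sqf R 1 ⊆ ((Icc 1 k) ×ˢ (sqf R k)).image (fun x => x.1 * x.2) := by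
      intro n hn
      simp only [sqf, mem_filter, mem_Icc] at hn
      rw [mem_image]
      have hg : n.gcd k ∣ n := Nat.gcd_dvd_left n k
      obtain ⟨m, hm⟩ := hg
      have hgp : 0 < n.gcd k := Nat.gcd_pos_of_pos_left _ hn.1.1
      have hmp : 0 < m := by
        rcases Nat.eq_zero_or_pos m with h | h
        · rw [h] at hm; omega
        · exact h
      refine ⟨(n.gcd k, m), ?_, hm.symm⟩
      simp only [mem_product, mem_Icc, sqf, mem_filter]
      have hcop : (n.gcd k).Coprime m := by
        have := hn.2.1
        rw [hm] at this
        exact Nat.coprime_of_squarefree_mul this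
      refine ⟨⟨hgp, Nat.gcd_le_right _ hk⟩, ⟨hmp, ?_⟩, ?_, ?_⟩
      · nlinarith
      · exact hn.2.1.squarefree_of_dvd ⟨n.gcd k, by rw [mul_comm]; exact hm⟩
      · -- m coprime k
        have h2 : m.gcd k ∣ n.gcd k := Nat.gcd_dvd_gcd_of_dvd_left _ ⟨n.gcd k, by rw [mul_comm]; exact hm⟩
        have h3 : m.gcd k ∣ m := Nat.gcd_dvd_left _ _
        exact Nat.eq_one_of_dvd_coprimes hcop h2 h3
    calc sV R 1 ≤ ∑ n ∈ (((Icc 1 k) ×ˢ (sqf R k)).image (fun x => x.1 * x.2) : Finset ℕ), (1:ℝ)/(n:ℝ) := by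
          apply sum_le_sum_of_subset_of_nonneg hsub
          intros; positivity
      _ ≤ ∑ x ∈ (Icc 1 k) ×ˢ (sqf R k), (1:ℝ)/((x.1 * x.2 : ℕ):ℝ) := by
          apply sum_image_le_of_nonneg
          intros; positivity
      _ = _ := by push_cast; rfl
  refine h1.trans ?_
  rw [sum_product]
  have : ∀ m ∈ Icc 1 k, ∑ l ∈ sqf R k, (1:ℝ)/((m:ℝ) * l) = 1/(m:ℝ) * sV R k := by
    intro m _
    rw [sV, mul_sum]
    refine sum_congr rfl fun l _ => by rw [div_mul_div_comm, one_mul]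
  rw [sum_congr rfl this, ← sum_mul]
  apply mul_le_mul_of_nonneg_right
  · have := harmonic_le_one_add_log k
    rw [harmonic_eq_sum_Icc] at this
    push_cast at this
    simpa using this
  · exact sum_nonneg fun l _ => by positivity

lemma log_le_harm (R : ℕ) (hR : 1 ≤ R) : Real.log R ≤ ∑ n ∈ Icc 1 R, (1:ℝ)/n := by
  have := log_add_one_le_harmonic R
  rw [harmonic_eq_sum_Icc] at this
  push_cast at this
  have h2 : Real.log R ≤ Real.log (R+1) := Real.log_le_log (by positivity) (by linarith)
  simp only [one_div]
  linarith

lemma sV_ge (R k : ℕ) (hR : 1 ≤ R) (hk : 1 ≤ k) : Real.log R ≤ 2 * (1 + Real.log k) * sV R k := by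
  have := log_le_harm R hR
  have := harm_le R
  have := sV_one_le R k hk
  linarith

noncomputable def sy (R k l : ℕ) : ℝ :=
  if l ∈ sqf R k then (ArithmeticFunction.moebius l : ℝ) / (l * sV R k) else 0

noncomputable def slam (R k d : ℕ) : ℝ :=
  d * ∑ l ∈ (sqf R k).filter (fun l => d ∣ l), (ArithmeticFunction.moebius (l / d) : ℝ) * sy R k l

lemma sV_pos (R k : ℕ) (hR : 1 ≤ R) : 0 < sV R k := by
  unfold sV
  apply sum_pos'
  · intros; positivity
  · exact ⟨1, by simp [sqf, hR], by norm_num⟩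

lemma slam_one (R k : ℕ) (hR : 1 ≤ R) : slam R k 1 = 1 := by
  have hV := sV_pos R k hR
  unfold slam
  simp only [Nat.cast_one, one_mul, isUnit_one, IsUnit.dvd, filter_true, Nat.div_one]
  have : ∀ l ∈ sqf R k, (ArithmeticFunction.moebius l : ℝ) * sy R k l = (1/l) * (1/sV R k) := by
    intro l hl
    rw [sy, if_pos hl]
    have hsq : Squarefree l := by simp only [sqf, mem_filter] at hl; exact hl.2.1
    have h1 : (ArithmeticFunction.moebius l : ℝ)^2 = 1 := by
      have := ArithmeticFunction.moebius_sq_eq_one_of_squarefree hsq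
      exact_mod_cast this
    have hl0 : (l:ℝ) ≠ 0 := by
      have := hsq.ne_zero
      exact_mod_cast this
    field_simp
    exact h1
  rw [sum_congr rfl this, ← sum_mul]
  change sV R k * _ = 1
  field_simp

lemma abs_moebius_le_real (n : ℕ) : |(ArithmeticFunction.moebius n : ℝ)| ≤ 1 := by
  have := ArithmeticFunction.abs_moebius_le_one (n := n)
  exact_mod_cast this

lemma abs_slam_le (R k d : ℕ) (hR : 1 ≤ R) : |slam R k d| ≤ d := by
  have hV := sV_pos R k hR
  unfold slam
  rw [abs_mul, Nat.abs_cast]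
  apply mul_le_of_le_one_right (by positivity)
  calc |∑ l ∈ (sqf R k).filter (fun l => d ∣ l), (ArithmeticFunction.moebius (l / d) : ℝ) * sy R k l|
      ≤ ∑ l ∈ (sqf R k).filter (fun l => d ∣ l), |(ArithmeticFunction.moebius (l / d) : ℝ) * sy R k l| := abs_sum_le_sum_abs _ _
    _ ≤ ∑ l ∈ (sqf R k).filter (fun l => d ∣ l), (1/l) * (1/sV R k) := by
        apply sum_le_sum
        intro l hl
        have hl' := (mem_filter.1 hl).1
        rw [abs_mul, sy, if_pos hl', abs_div, abs_of_nonneg (show (0:ℝ) ≤ l * sV R k by positivity)]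
        have h1 := abs_moebius_le_real (l/d)
        have h2 := abs_moebius_le_real l
        calc _ ≤ 1 * (1 / (l * sV R k)) := by gcongr
          _ = _ := by rw [one_mul, div_mul_div_comm, one_mul]
    _ ≤ ∑ l ∈ (sqf R k), (1/(l:ℝ)) * (1/sV R k) := by
        apply sum_le_sum_of_subset_of_nonneg (filter_subset _ _)
        intros; positivity
    _ = 1 := by
        rw [← sum_mul]; change sV R k * _ = 1; field_simp

lemma slam_eq_zero (R k d : ℕ) (h : ¬ d.Coprime k) : slam R k d = 0 := by
  unfold slam
  rw [filter_eq_empty_iff.2]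
  · simp
  · intro l hl hd
    simp only [sqf, mem_filter] at hl
    exact h (Nat.Coprime.coprime_dvd_left hd hl.2.2)

lemma sum_moebius_between (l m : ℕ) (hm : m ≠ 0) (R : ℕ) (hmR : m ≤ R) :
    ∑ d ∈ (Icc 1 R).filter (fun d => l ∣ d ∧ d ∣ m), (ArithmeticFunction.moebius (m / d) : ℝ)
      = if l = m then 1 else 0 := by
  by_cases hlm : l ∣ m
  · obtain ⟨n, rfl⟩ := hlm
    have hl : l ≠ 0 := left_ne_zero_of_mul hm
    have hn : n ≠ 0 := right_ne_zero_of_mul hm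
    have hset : (Icc 1 R).filter (fun d => l ∣ d ∧ d ∣ l * n) = n.divisors.image (fun e => l * e) := by
      ext d
      simp only [mem_filter, mem_Icc, mem_image, Nat.mem_divisors]
      constructor
      · rintro ⟨-, ⟨e, rfl⟩, h⟩
        exact ⟨e, ⟨Nat.dvd_of_mul_dvd_mul_left (Nat.pos_of_ne_zero hl) h, hn⟩, rfl⟩
      · rintro ⟨e, ⟨he, -⟩, rfl⟩
        have he' : l * e ∣ l * n := Nat.mul_dvd_mul_left l he
        have := Nat.le_of_dvd (Nat.pos_of_ne_zero hm) he'
        have := Nat.pos_of_dvd_of_pos he' (Nat.pos_of_ne_zero hm)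
        exact ⟨⟨this, by omega⟩, ⟨e, rfl⟩, he'⟩
    rw [hset, sum_image (by intro a _ b _ h; exact Nat.eq_of_mul_eq_mul_left (Nat.pos_of_ne_zero hl) h)]
    have : ∀ e ∈ n.divisors, (ArithmeticFunction.moebius (l * n / (l * e)) : ℝ) = ((ArithmeticFunction.moebius (n / e) : ℤ) : ℝ) := by
      intro e _
      rw [Nat.mul_div_mul_left _ _ (Nat.pos_of_ne_zero hl)]
    rw [sum_congr rfl this, Nat.sum_div_divisors n (fun e => ((ArithmeticFunction.moebius e : ℤ) : ℝ)), ← Int.cast_sum]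
    have h3 : ∑ d ∈ n.divisors, ArithmeticFunction.moebius d = if n = 1 then 1 else 0 := by
      rw [← ArithmeticFunction.coe_mul_zeta_apply, ArithmeticFunction.moebius_mul_coe_zeta, ArithmeticFunction.one_apply]
    rw [h3]
    by_cases h : n = 1
    · simp [h]
    · rw [if_neg h, if_neg]
      · simp
      · intro h'
        exact h (by simpa [hl] using h'.symm)
  · rw [filter_eq_empty_iff.2, if_neg (by rintro rfl; exact hlm dvd_rfl)]
    · simp
    · rintro d - ⟨h1, h2⟩
      exact hlm (h1.trans h2)

lemma sum_slam_div (R k l : ℕ) (hl : l ∈ Icc 1 R) :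
    ∑ d ∈ (Icc 1 R).filter (fun d => l ∣ d), slam R k d / d = sy R k l := by
  have h1 : ∀ d ∈ (Icc 1 R).filter (fun d => l ∣ d), slam R k d / d =
      ∑ m ∈ sqf R k, if d ∣ m then (ArithmeticFunction.moebius (m / d) : ℝ) * sy R k m else 0 := by
    intro d hd
    have hd0 : (d:ℝ) ≠ 0 := by
      have := (mem_Icc.1 (mem_filter.1 hd).1).1
      have : d ≠ 0 := by omega
      exact_mod_cast this
    rw [slam, sum_filter]
    field_simp
  rw [sum_congr rfl h1, sum_comm]
  have h2 : ∀ m ∈ sqf R k, (∑ d ∈ (Icc 1 R).filter (fun d => l ∣ d), if d ∣ m then (ArithmeticFunction.moebius (m / d) : ℝ) * sy R k m else 0) = if l = m then sy R k m else 0 := by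
    intro m hm
    have hm' : m ∈ Icc 1 R := (mem_filter.1 hm).1
    rw [mem_Icc] at hm'
    rw [← sum_filter, filter_filter, ← sum_mul, sum_moebius_between l m (by omega) R hm'.2]
    split_ifs <;> simp
  rw [sum_congr rfl h2, sum_ite_eq]
  split_ifs with h
  · rfl
  · rw [sy, if_neg h]

lemma selberg_form (R k : ℕ) (hR : 1 ≤ R) :
    ∑ d ∈ Icc 1 R, ∑ e ∈ Icc 1 R, slam R k d * slam R k e / (d.lcm e : ℝ) ≤ 1 / sV R k := by
  have hV := sV_pos R k hR
  have h1 : ∀ d ∈ Icc 1 R, ∀ e ∈ Icc 1 R, slam R k d * slam R k e / (d.lcm e : ℝ) =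
      ∑ l ∈ Icc 1 R, (if l ∣ d then slam R k d / d else 0) * (if l ∣ e then slam R k e / e else 0) * (l.totient : ℝ) := by
    intro d hd e he
    rw [mem_Icc] at hd he
    have hd0 : (d:ℝ) ≠ 0 := by
      have : d ≠ 0 := by omega
      exact_mod_cast this
    have he0 : (e:ℝ) ≠ 0 := by
      have : e ≠ 0 := by omega
      exact_mod_cast this
    have hg : ((d.gcd e : ℕ):ℝ) = ∑ l ∈ (Icc 1 R).filter (fun l => l ∣ d ∧ l ∣ e), (l.totient:ℝ) := by
      rw [← Nat.sum_totient (d.gcd e)]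
      push_cast
      apply sum_congr _ (fun _ _ => rfl)
      ext l
      simp only [Nat.mem_divisors, mem_filter, mem_Icc, Nat.dvd_gcd_iff]
      constructor
      · rintro ⟨⟨h1, h2⟩, -⟩
        have := Nat.le_of_dvd (by omega) h1
        have := Nat.pos_of_dvd_of_pos h1 (by omega)
        exact ⟨⟨by omega, by omega⟩, h1, h2⟩
      · rintro ⟨-, h⟩
        exact ⟨h, (Nat.gcd_pos_of_pos_left _ (by omega)).ne'⟩
    have hl : (d.gcd e : ℝ) * (d.lcm e : ℝ) = d * e := by
      have := Nat.gcd_mul_lcm d e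
      exact_mod_cast this
    have hl0 : (d.lcm e : ℝ) ≠ 0 := by
      have : d.lcm e ≠ 0 := Nat.lcm_ne_zero (by omega) (by omega)
      exact_mod_cast this
    have : slam R k d * slam R k e / (d.lcm e : ℝ) = (slam R k d / d) * (slam R k e / e) * (d.gcd e : ℝ) := by
      rw [div_mul_div_comm, ← hl]
      have hg0 : (d.gcd e : ℝ) ≠ 0 := by
        have : d.gcd e ≠ 0 := (Nat.gcd_pos_of_pos_left _ (by omega)).ne'
        exact_mod_cast this
      field_simp
    rw [this, hg, mul_sum, sum_filter]
    apply sum_congr rfl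
    intro l _
    by_cases h1 : l ∣ d <;> by_cases h2 : l ∣ e <;> simp [h1, h2]
  have h2 : ∑ d ∈ Icc 1 R, ∑ e ∈ Icc 1 R, slam R k d * slam R k e / (d.lcm e : ℝ)
      = ∑ l ∈ Icc 1 R, (sy R k l)^2 * l.totient := by
    rw [sum_congr rfl fun d hd => sum_congr rfl fun e he => h1 d hd e he]
    rw [sum_congr rfl fun d hd => sum_comm, sum_comm]
    apply sum_congr rfl
    intro l hl
    rw [← sum_slam_div R k l hl, sum_filter, sq, sum_mul_sum, sum_mul]
    apply sum_congr rfl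
    intro d _
    rw [sum_mul]
  rw [h2]
  calc ∑ l ∈ Icc 1 R, (sy R k l)^2 * l.totient ≤ ∑ l ∈ Icc 1 R, if l ∈ sqf R k then (1/(l:ℝ)) * (1/(sV R k)^2) else 0 := by
        apply sum_le_sum
        intro l hl
        unfold sy
        split_ifs with h
        · have hl0 : (0:ℝ) < l := by
            have := (mem_Icc.1 hl).1
            exact_mod_cast this
          have hφ : (l.totient : ℝ) ≤ l := by exact_mod_cast Nat.totient_le l
          have hm : ((ArithmeticFunction.moebius l : ℝ))^2 ≤ 1 := by
            rw [← sq_abs]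
            exact pow_le_one₀ (abs_nonneg _) (abs_moebius_le_real l)
          rw [div_pow]
          calc _ ≤ 1 / (l * sV R k)^2 * l := by gcongr
            _ = _ := by field_simp
        · simp
    _ = ∑ l ∈ sqf R k, (1/(l:ℝ)) * (1/(sV R k)^2) := by
        rw [← sum_filter]
        congr 1
        ext l
        simp only [mem_filter, sqf]
        tauto
    _ = 1 / sV R k := by
        rw [← sum_mul]; change sV R k * _ = _; field_simp

lemma selberg_form' (R k : ℕ) (hR : 2 ≤ R) (hk : 1 ≤ k) :
    ∑ d ∈ Icc 1 R, ∑ e ∈ Icc 1 R, slam R k d * slam R k e / (d.lcm e : ℝ) ≤ 2 * (1 + Real.log k) / Real.log R := by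
  refine (selberg_form R k (by omega)).trans ?_
  have hV := sV_pos R k (by omega)
  have hlog : 0 < Real.log R := Real.log_pos (by exact_mod_cast hR)
  rw [div_le_div_iff₀ hV hlog, one_mul]
  exact sV_ge R k (by omega) hk

noncomputable def sw (R k n : ℕ) : ℝ := (∑ d ∈ (Icc 1 R).filter (fun d => d ∣ n), slam R k d)^2

lemma sw_nonneg (R k n : ℕ) : 0 ≤ sw R k n := sq_nonneg _

lemma sw_prime (R k p : ℕ) (hR : 1 ≤ R) (hp : p.Prime) (hpR : R < p) : sw R k p = 1 := by
  unfold sw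
  have : (Icc 1 R).filter (fun d => d ∣ p) = {1} := by
    ext d
    simp only [mem_filter, mem_Icc, mem_singleton, Nat.dvd_prime hp]
    constructor
    · rintro ⟨h1, h2 | h2⟩ <;> omega
    · rintro rfl; exact ⟨⟨le_rfl, hR⟩, Or.inl rfl⟩
  rw [this, sum_singleton, slam_one R k hR, one_pow]

lemma sw_expand (R k : ℕ) (S : Finset ℕ) (f : ℕ → ℝ) :
    ∑ n ∈ S, sw R k n * f n = ∑ d ∈ Icc 1 R, ∑ e ∈ Icc 1 R, slam R k d * slam R k e *
      ∑ n ∈ S.filter (fun n => d.lcm e ∣ n), f n := by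
  have h : ∀ n ∈ S, sw R k n * f n = ∑ d ∈ Icc 1 R, ∑ e ∈ Icc 1 R,
      if d.lcm e ∣ n then slam R k d * slam R k e * f n else 0 := by
    intro n _
    unfold sw
    rw [sum_filter, sq, sum_mul_sum, sum_mul]
    refine sum_congr rfl fun d _ => ?_
    rw [sum_mul]
    refine sum_congr rfl fun e _ => ?_
    have : d.lcm e ∣ n ↔ d ∣ n ∧ e ∣ n := Nat.lcm_dvd_iff
    by_cases h1 : d ∣ n <;> by_cases h2 : e ∣ n <;> simp [this, h1, h2]
  rw [sum_congr rfl h, sum_comm]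
  refine sum_congr rfl fun d _ => ?_
  rw [sum_comm]
  refine sum_congr rfl fun e _ => ?_
  rw [sum_filter, mul_sum]
  refine sum_congr rfl fun n _ => ?_
  split_ifs <;> simp

lemma count_ap (X r v : ℕ) (hr : 0 < r) :
    |(((Ioc 0 X).filter (fun n => n ≡ v [MOD r])).card : ℝ) - X / r| ≤ 1 := by
  have h := Nat.Ioc_filter_modEq_card 0 X hr v
  have hrq : (0:ℚ) < r := by exact_mod_cast hr
  set A := ⌊((X:ℚ) - v) / r⌋
  set B := ⌊(((0:ℕ):ℚ) - v) / r⌋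
  have hA1 : (A:ℚ) ≤ ((X:ℚ) - v) / r := Int.floor_le _
  have hA2 : ((X:ℚ) - v) / r < A + 1 := Int.lt_floor_add_one _
  have hB1 : (B:ℚ) ≤ (((0:ℕ):ℚ) - v) / r := Int.floor_le _
  have hB2 : (((0:ℕ):ℚ) - v) / r < B + 1 := Int.lt_floor_add_one _
  have hBA : B ≤ A := by
    apply Int.floor_le_floor
    gcongr
    simp
  have hc : (((Ioc 0 X).filter (fun n => n ≡ v [MOD r])).card : ℤ) = A - B := by
    rw [h]; omega
  have hc' : (((Ioc 0 X).filter (fun n => n ≡ v [MOD r])).card : ℚ) = A - B := by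
    exact_mod_cast hc
  have hsplit : ((X:ℚ) - v) / r = X / r + (((0:ℕ):ℚ) - v) / r := by
    field_simp; push_cast; ring
  have : |(((Ioc 0 X).filter (fun n => n ≡ v [MOD r])).card : ℚ) - X / r| ≤ 1 := by
    rw [hc', abs_le]
    constructor <;> linarith
  have h3 : (((|(((Ioc 0 X).filter (fun n => n ≡ v [MOD r])).card : ℚ) - X / r| : ℚ)) : ℝ) ≤ ((1:ℚ):ℝ) := by
    exact_mod_cast this
  push_cast at h3
  exact h3

lemma count_ap2 (X k m : ℕ) (hk : 0 < k) (hm : 0 < m) (hc : m.Coprime k) :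
    |((((Ioc 0 X).filter (fun n => n ≡ 1 [MOD k])).filter (fun n => m ∣ n)).card : ℝ) - X / (k * m)| ≤ 1 := by
  obtain ⟨v, hv1, hv2⟩ := Nat.chineseRemainder hc 0 1
  have h := count_ap X (k*m) v (by positivity)
  have hs : ((Ioc 0 X).filter (fun n => n ≡ 1 [MOD k])).filter (fun n => m ∣ n) =
      (Ioc 0 X).filter (fun n => n ≡ v [MOD (k * m)]) := by
    rw [filter_filter]
    apply filter_congr
    intro n _
    rw [← Nat.modEq_and_modEq_iff_modEq_mul hc.symm, ← Nat.modEq_zero_iff_dvd]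
    constructor
    · rintro ⟨a, b⟩; exact ⟨a.trans hv2.symm, b.trans hv1.symm⟩
    · rintro ⟨a, b⟩; exact ⟨a.trans hv2, b.trans hv1⟩
  rw [hs]
  push_cast at h
  exact h

lemma sw_sum_le (R k X : ℕ) (hR : 2 ≤ R) (hk : 1 ≤ k) :
    ∑ n ∈ (Ioc 0 X).filter (fun n => n ≡ 1 [MOD k]), sw R k n ≤
      (X / k : ℝ) * (2 * (1 + Real.log k) / Real.log R) + (R:ℝ)^4 := by
  have h0 := sw_expand R k ((Ioc 0 X).filter (fun n => n ≡ 1 [MOD k])) (fun _ => 1)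
  simp only [mul_one] at h0
  rw [h0]
  have hterm : ∀ d ∈ Icc 1 R, ∀ e ∈ Icc 1 R, slam R k d * slam R k e *
      ∑ n ∈ ((Ioc 0 X).filter (fun n => n ≡ 1 [MOD k])).filter (fun n => d.lcm e ∣ n), (1:ℝ)
      ≤ (X / k : ℝ) * (slam R k d * slam R k e / (d.lcm e : ℝ)) + (R:ℝ)^2 := by
    intro d hd e he
    rw [mem_Icc] at hd he
    have hkR : (0:ℝ) < k := by exact_mod_cast hk
    by_cases hdc : d.Coprime k
    swap
    · rw [slam_eq_zero R k d hdc]; simp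
    by_cases hec : e.Coprime k
    swap
    · rw [slam_eq_zero R k e hec]; simp
    have hlc : (d.lcm e).Coprime k := by
      exact Nat.Coprime.coprime_dvd_left (Nat.lcm_dvd_mul d e) (Nat.Coprime.mul_left hdc hec)
    have hlp : 0 < d.lcm e := Nat.lcm_pos (by omega) (by omega)
    have hc := count_ap2 X k (d.lcm e) hk hlp hlc
    rw [sum_const, nsmul_eq_mul, mul_one]
    set c := ((((Ioc 0 X).filter (fun n => n ≡ 1 [MOD k])).filter (fun n => d.lcm e ∣ n)).card : ℝ)
    have hl1 := abs_slam_le R k d (by omega)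
    have hl2 := abs_slam_le R k e (by omega)
    have hprod : |slam R k d * slam R k e| ≤ (R:ℝ)^2 := by
      rw [abs_mul, sq]
      have : (d:ℝ) ≤ R := by exact_mod_cast hd.2
      have : (e:ℝ) ≤ R := by exact_mod_cast he.2
      gcongr <;> linarith
    have hlR : (0:ℝ) < (d.lcm e : ℝ) := by exact_mod_cast hlp
    have : slam R k d * slam R k e * c = (X / k : ℝ) * (slam R k d * slam R k e / (d.lcm e : ℝ)) +
        slam R k d * slam R k e * (c - X / (k * (d.lcm e : ℝ))) := by
      field_simp
      ring
    rw [this]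
    have h5 : slam R k d * slam R k e * (c - X / (k * (d.lcm e : ℝ))) ≤ (R:ℝ)^2 * 1 := by
      refine (le_abs_self _).trans ?_
      rw [abs_mul]
      gcongr
    linarith
  calc _ ≤ ∑ d ∈ Icc 1 R, ∑ e ∈ Icc 1 R, ((X / k : ℝ) * (slam R k d * slam R k e / (d.lcm e : ℝ)) + (R:ℝ)^2) :=
        sum_le_sum fun d hd => sum_le_sum fun e he => hterm d hd e he
    _ = (X / k : ℝ) * (∑ d ∈ Icc 1 R, ∑ e ∈ Icc 1 R, slam R k d * slam R k e / (d.lcm e : ℝ)) + (R:ℝ)^4 := by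
        simp only [sum_add_distrib, ← mul_sum, sum_const, Nat.card_Icc, nsmul_eq_mul]
        push_cast
        ring
    _ ≤ _ := by
        have := selberg_form' R k hR hk
        gcongr

lemma sieve_titch (R k X : ℕ) (hR : 2 ≤ R) (hk : 1 ≤ k) :
    (((Ioc R X).filter (fun p => p.Prime ∧ p ≡ 1 [MOD k])).card : ℝ) ≤
      (X / k : ℝ) * (2 * (1 + Real.log k) / Real.log R) + (R:ℝ)^4 := by
  refine le_trans ?_ (sw_sum_le R k X hR hk)
  rw [card_eq_sum_ones]
  push_cast
  calc _ = ∑ p ∈ (Ioc R X).filter (fun p => p.Prime ∧ p ≡ 1 [MOD k]), sw R k p := by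
        refine sum_congr rfl fun p hp => ?_
        simp only [mem_filter, mem_Ioc] at hp
        rw [sw_prime R k p (by omega) hp.2.1 hp.1.1]
    _ ≤ _ := by
        apply sum_le_sum_of_subset_of_nonneg
        · intro p hp
          simp only [mem_filter, mem_Ioc] at hp ⊢
          exact ⟨⟨by omega, hp.1.2⟩, hp.2.2⟩
        · intros; exact sw_nonneg _ _ _

lemma sw_sum_le_one (R X : ℕ) (hR : 2 ≤ R) :
    ∑ n ∈ Ioc 0 X, sw R 1 n ≤ (X : ℝ) * (2 / Real.log R) + (R:ℝ)^4 := by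
  have := sw_sum_le R 1 X hR le_rfl
  rw [filter_true_of_mem (by intro n _; exact Nat.modEq_one)] at this
  simpa using this

/-- mean value on the nonzero classes -/
noncomputable def gc (q : ℕ) (K : Finset ℕ) : ℝ := (((Ico 1 q).filter (fun k => k ∈ K)).card : ℝ) / ((q:ℝ) - 1)

noncomputable def gK (b q : ℕ) (K : Finset ℕ) (n : ℕ) : ℝ :=
  if (n : ZMod q) = 0 ∨ (b : ZMod q)^n = b then 0
  else (if (((b : ZMod q)^n - b) * (n : ZMod q)⁻¹).val ∈ K then 1 else 0) - gc q K

lemma gc_mem (q : ℕ) (hq : q.Prime) (K : Finset ℕ) : 0 ≤ gc q K ∧ gc q K ≤ 1 := by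
  have h2 : (2:ℝ) ≤ q := by exact_mod_cast hq.two_le
  unfold gc
  constructor
  · apply div_nonneg <;> linarith [Nat.cast_nonneg (α := ℝ) ((Ico 1 q).filter (fun k => k ∈ K)).card]
  · rw [div_le_one (by linarith)]
    have : ((Ico 1 q).filter (fun k => k ∈ K)).card ≤ q - 1 := by
      refine (card_filter_le _ _).trans ?_
      simp
    have h := (Nat.cast_le (α := ℝ)).2 this
    rwa [Nat.cast_sub (by linarith [hq.two_le]), Nat.cast_one] at h

lemma abs_gK_le (b q : ℕ) (hq : q.Prime) (K : Finset ℕ) (n : ℕ) : |gK b q K n| ≤ 1 := by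
  have := gc_mem q hq K
  unfold gK
  split_ifs
  · simp
  · rw [abs_le]; constructor <;> linarith
  · rw [abs_le]; constructor <;> linarith

lemma pow_add_mul (b q : ℕ) (hq : q.Prime) (hb : ¬ q ∣ b) (a M : ℕ) (hM : (q - 1) ∣ M) (t : ℕ) :
    (b : ZMod q)^(a + M * t) = (b : ZMod q)^a := by
  have := Fact.mk hq
  obtain ⟨c, rfl⟩ := hM
  have hb0 : (b : ZMod q) ≠ 0 := by rwa [Ne, ZMod.natCast_eq_zero_iff]
  rw [pow_add, mul_assoc, pow_mul, ZMod.pow_card_sub_one_eq_one hb0, one_pow, mul_one]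

lemma gK_periodic (b q : ℕ) (hq : q.Prime) (hb : ¬ q ∣ b) (K : Finset ℕ) (M : ℕ) (hM : (q - 1) ∣ M)
    (hqM : q ∣ M) (n : ℕ) : gK b q K (n + M) = gK b q K n := by
  have h1 := pow_add_mul b q hq hb n M hM 1
  rw [mul_one] at h1
  have h2 : ((n + M : ℕ) : ZMod q) = n := by
    push_cast
    rw [(ZMod.natCast_eq_zero_iff M q).2 hqM, add_zero]
  unfold gK
  rw [h1, h2]

lemma sum_gK_zero (b q : ℕ) (hq : q.Prime) (hb : ¬ q ∣ b) (K : Finset ℕ) (M : ℕ) (hM : (q - 1) ∣ M)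
    (hc : M.Coprime q) (a : ℕ) : ∑ t ∈ range q, gK b q K (a + M * t) = 0 := by
  have := Fact.mk hq
  set u : ZMod q := (b : ZMod q)^a - b with hu
  -- function on ZMod q
  set G : ZMod q → ℝ := fun c => if c = 0 ∨ u = 0 then 0 else (if (u * c⁻¹).val ∈ K then 1 else 0) - gc q K with hG
  have h1 : ∀ t : ℕ, gK b q K (a + M * t) = G ((a : ZMod q) + M * (t : ZMod q)) := by
    intro t
    unfold gK
    rw [pow_add_mul b q hq hb a M hM t, hG]
    simp only [hu, sub_eq_zero]
    push_cast
    rfl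
  simp_rw [h1]
  have h2 : ∑ t ∈ range q, G ((a : ZMod q) + M * (t : ZMod q)) = ∑ x : ZMod q, G (a + M * x) := by
    refine sum_bij' (fun t _ => (t : ZMod q)) (fun x _ => x.val) ?_ ?_ ?_ ?_ ?_
    · intros; simp
    · intro x _; simpa using ZMod.val_lt x
    · intro t ht; exact ZMod.val_cast_of_lt (by simpa using ht)
    · intro x _; simp
    · intros; rfl
  have hM0 : (M : ZMod q) ≠ 0 := by
    rw [Ne, ZMod.natCast_eq_zero_iff]
    intro h
    have := Nat.Coprime.eq_one_of_dvd hc.symm h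
    exact hq.one_lt.ne' this
  have h3 : ∑ x : ZMod q, G (a + M * x) = ∑ x : ZMod q, G x := by
    let e : ZMod q ≃ ZMod q := (Equiv.mulLeft₀ (M : ZMod q) hM0).trans (Equiv.addLeft (a : ZMod q))
    exact Fintype.sum_equiv e _ _ (fun x => by simp [e])
  rw [h2, h3]
  by_cases hu0 : u = 0
  · simp [hG, hu0]
  -- replace
  have h4 : ∑ x : ZMod q, G x = ∑ x ∈ (univ : Finset (ZMod q)).filter (· ≠ 0), ((if (u * x⁻¹).val ∈ K then 1 else 0) - gc q K) := by
    rw [sum_filter]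
    refine sum_congr rfl fun x _ => ?_
    simp only [hG]
    by_cases hx : x = 0 <;> simp [hx, hu0]
  have h5 : ∑ x ∈ (univ : Finset (ZMod q)).filter (· ≠ 0), ((if (u * x⁻¹).val ∈ K then (1:ℝ) else 0) - gc q K)
      = ∑ k ∈ Ico 1 q, ((if k ∈ K then (1:ℝ) else 0) - gc q K) := by
    refine sum_bij' (fun x _ => (u * x⁻¹).val) (fun k _ => u * (k : ZMod q)⁻¹) ?_ ?_ ?_ ?_ ?_
    · intro x hx
      have hx0 : x ≠ 0 := by simpa using hx
      rw [mem_Ico]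
      refine ⟨?_, ZMod.val_lt _⟩
      rw [Nat.one_le_iff_ne_zero, Ne, ZMod.val_eq_zero]
      exact mul_ne_zero hu0 (inv_ne_zero hx0)
    · intro k hk
      rw [mem_Ico] at hk
      simp only [mem_filter, mem_univ, true_and]
      refine mul_ne_zero hu0 (inv_ne_zero ?_)
      rw [Ne, ZMod.natCast_eq_zero_iff]
      intro h
      have := Nat.le_of_dvd (by omega) h
      omega
    · intro x hx
      have hx0 : x ≠ 0 := by simpa using hx
      simp only [ZMod.natCast_val, ZMod.cast_id', id_eq]
      field_simp
    · intro k hk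
      rw [mem_Ico] at hk
      have : (k : ZMod q) ≠ 0 := by
        rw [Ne, ZMod.natCast_eq_zero_iff]
        intro h
        have := Nat.le_of_dvd (by omega) h
        omega
      have h : u * (u * (k : ZMod q)⁻¹)⁻¹ = k := by field_simp
      rw [h]
      exact ZMod.val_cast_of_lt hk.2
    · intros; rfl
  rw [h4, h5, sum_sub_distrib, sum_const, ← sum_filter, sum_const, Nat.card_Ico]
  have h2 : (2:ℝ) ≤ q := by exact_mod_cast hq.two_le
  simp only [nsmul_eq_mul, mul_one]
  rw [Nat.cast_sub hq.one_lt.le, gc]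
  have : (q:ℝ) - 1 ≠ 0 := by linarith
  push_cast
  field_simp
  ring

lemma sum_periodic_range (f : ℕ → ℝ) (L : ℕ) (hp : ∀ n, f (n + L) = f n)
    (h0 : ∑ n ∈ range L, f n = 0) (hb : ∀ n, |f n| ≤ 1) (X : ℕ) (hL : 0 < L): 
    ∑ n ∈ range X, f n = ∑ n ∈ range (X % L), f n := by
  have h1 : ∀ m n, f (n + L * m) = f n := by
    intro m
    induction m with
    | zero => simp
    | succ m ih => intro n; rw [Nat.mul_succ, ← add_assoc, hp, ih]
  have h2 : ∀ m, ∑ n ∈ range (L * m), f n = 0 := by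
    intro m
    induction m with
    | zero => simp
    | succ m ih =>
      rw [Nat.mul_succ, sum_range_add, ih, zero_add, ← h0]
      refine sum_congr rfl fun n _ => ?_
      rw [add_comm]; exact h1 m n
  conv_lhs => rw [← Nat.div_add_mod X L, sum_range_add, h2, zero_add]
  refine sum_congr rfl fun n _ => ?_
  rw [add_comm]; exact h1 _ n

lemma sum_periodic_le (f : ℕ → ℝ) (L : ℕ) (hp : ∀ n, f (n + L) = f n)
    (h0 : ∑ n ∈ range L, f n = 0) (hb : ∀ n, |f n| ≤ 1) (X Y : ℕ) (hL : 0 < L) :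
    |∑ n ∈ Ioc X Y, f n| ≤ 2 * L := by
  have hr : ∀ Z, |∑ n ∈ range Z, f n| ≤ L := by
    intro Z
    rw [sum_periodic_range f L hp h0 hb Z hL]
    refine (abs_sum_le_sum_abs _ _).trans ?_
    calc _ ≤ ∑ n ∈ range (Z % L), (1:ℝ) := sum_le_sum fun n _ => hb n
      _ = ((Z % L : ℕ) : ℝ) := by simp
      _ ≤ L := by exact_mod_cast (Nat.mod_lt _ hL).le
  rcases le_total Y X with h | h
  · rw [Ioc_eq_empty (by omega)]; simp
  · have : ∑ n ∈ Ioc X Y, f n = ∑ n ∈ range (Y+1), f n - ∑ n ∈ range (X+1), f n := by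
      rw [← Finset.sum_Ico_eq_sub _ (by omega)]
      congr 1
      ext n
      simp only [mem_Ioc, mem_Ico]
      omega
    rw [this]
    refine (abs_sub _ _).trans ?_
    have := hr (Y+1)
    have := hr (X+1)
    linarith

lemma sum_gK_mul_le (b q : ℕ) (hq : q.Prime) (hb : ¬ q ∣ b) (K : Finset ℕ) (M : ℕ) (hM : (q - 1) ∣ M)
    (hM0 : 0 < M) (hc : M.Coprime q) (H : ℕ → ℝ) (hH : ∀ n, |H n| ≤ 1) (hHp : ∀ n, H (n + M) = H n) (X Y : ℕ) :
    |∑ n ∈ Ioc X Y, gK b q K n * H n| ≤ 2 * (M * q : ℕ) := by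
  have hHp2 : ∀ t n, H (n + M * t) = H n := by
    intro m
    induction m with
    | zero => simp
    | succ m ih => intro n; rw [Nat.mul_succ, ← add_assoc, hHp, ih]
  apply sum_periodic_le
  · intro n
    rw [gK_periodic b q hq hb K (M * q) (hM.mul_right q) (Dvd.intro_left M rfl), hHp2]
  · have : ∑ n ∈ range (M * q), gK b q K n * H n = ∑ a ∈ range M, ∑ t ∈ range q, gK b q K (a + M * t) * H (a + M * t) := by
      rw [← sum_product']
      symm
      refine sum_bij' (fun x _ => x.1 + M * x.2) (fun n _ => (n % M, n / M)) ?_ ?_ ?_ ?_ ?_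
      · rintro ⟨a, t⟩ h
        simp only [mem_product, mem_range] at h ⊢
        nlinarith
      · intro n hn
        simp only [mem_product, mem_range] at hn ⊢
        exact ⟨Nat.mod_lt _ hM0, Nat.div_lt_of_lt_mul hn⟩
      · rintro ⟨a, t⟩ h
        simp only [mem_product, mem_range] at h ⊢
        rw [Nat.add_mul_mod_self_left, Nat.mod_eq_of_lt h.1, Nat.add_mul_div_left _ _ hM0, Nat.div_eq_of_lt h.1, zero_add]
      · intro n hn
        exact Nat.mod_add_div n M
      · intros; rfl
    rw [this]
    apply sum_eq_zero
    intro a _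
    simp_rw [hHp2]
    rw [← sum_mul, sum_gK_zero b q hq hb K M hM hc a, zero_mul]
  · intro n
    rw [abs_mul]
    exact mul_le_one₀ (abs_gK_le b q hq K n) (abs_nonneg _) (hH n)
  · exact Nat.mul_pos hM0 hq.pos

lemma gK_corr_aux (b q q' : ℕ) (hq : q.Prime) (hq' : q'.Prime) (hb : ¬ q ∣ b) (hb' : ¬ q' ∣ b)
    (hlt : q' < q) (K K' : Finset ℕ) (m : ℕ) (hm : 0 < m) (X Y : ℕ) :
    |∑ n ∈ (Ioc X Y).filter (fun n => m ∣ n), gK b q K n * gK b q' K' n| ≤ 2 * ((m:ℝ) * q^2 * q'^2) := by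
  by_cases hqm : q ∣ m
  · rw [sum_eq_zero]
    · simp; positivity
    · intro n hn
      have : q ∣ n := hqm.trans (mem_filter.1 hn).2
      have h0 : gK b q K n = 0 := by
        unfold gK; rw [if_pos]; left; rwa [ZMod.natCast_eq_zero_iff]
      rw [h0, zero_mul]
  · set M := m * (q - 1) * (q' * (q' - 1)) with hMdef
    have h2 := hq.two_le
    have h2' := hq'.two_le
    have hM0 : 0 < M := by
      have : 0 < q - 1 := by omega
      have : 0 < q' - 1 := by omega
      positivity
    have hlt' : ∀ x, 0 < x → x < q → x.Coprime q := fun x hx hxq =>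
      ((Nat.Prime.coprime_iff_not_dvd hq).2 (Nat.not_dvd_of_pos_of_lt hx hxq)).symm
    have hc : M.Coprime q := by
      refine Nat.Coprime.mul_left (Nat.Coprime.mul_left ?_ ?_) (Nat.Coprime.mul_left ?_ ?_)
      · exact ((Nat.Prime.coprime_iff_not_dvd hq).2 hqm).symm
      · exact hlt' _ (by omega) (by omega)
      · exact hlt' _ (by omega) (by omega)
      · exact hlt' _ (by omega) (by omega)
    have h := sum_gK_mul_le b q hq hb K M ⟨m * (q' * (q'-1)), by rw [hMdef]; ring⟩ hM0 hc
      (fun n => if m ∣ n then gK b q' K' n else 0) ?_ ?_ X Y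
    · rw [sum_filter]
      have e : ∀ n ∈ Ioc X Y, (if m ∣ n then gK b q K n * gK b q' K' n else 0) = gK b q K n * (if m ∣ n then gK b q' K' n else 0) := by
        intro n _; split_ifs <;> simp
      rw [sum_congr rfl e]
      refine h.trans ?_
      have : M * q ≤ m * q^2 * q'^2 := by
        calc M * q ≤ m * q * (q' * q') * q := by
              rw [hMdef]; gcongr <;> omega
          _ = _ := by ring
      have := (Nat.cast_le (α := ℝ)).2 this
      push_cast at this ⊢
      linarith
    · intro n
      split_ifs
      · exact abs_gK_le b q' hq' K' n
      · simp
    · intro n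
      have h1 : m ∣ M := ⟨(q-1) * (q' * (q' - 1)), by rw [hMdef]; ring⟩
      rw [gK_periodic b q' hq' hb' K' M ⟨m * (q-1) * q', by rw [hMdef]; ring⟩ ⟨m * (q-1) * (q'-1), by rw [hMdef]; ring⟩]
      simp only [Nat.dvd_add_left h1]

lemma gK_corr (b q q' : ℕ) (hq : q.Prime) (hq' : q'.Prime) (hb : ¬ q ∣ b) (hb' : ¬ q' ∣ b)
    (hne : q ≠ q') (K K' : Finset ℕ) (m : ℕ) (hm : 0 < m) (X Y : ℕ) :
    |∑ n ∈ (Ioc X Y).filter (fun n => m ∣ n), gK b q K n * gK b q' K' n| ≤ 2 * ((m:ℝ) * q^2 * q'^2) := by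
  rcases lt_or_gt_of_ne hne with h | h
  · have := gK_corr_aux b q' q hq' hq hb' hb h K' K m hm X Y
    simp_rw [mul_comm (gK b q K _)]
    linarith
  · exact gK_corr_aux b q q' hq hq' hb hb' h K K' m hm X Y

lemma offdiag (R Z b q q' : ℕ) (hR : 2 ≤ R) (hq : q.Prime) (hq' : q'.Prime) (hb : ¬ q ∣ b) (hb' : ¬ q' ∣ b)
    (hne : q ≠ q') (hZ : q ≤ Z) (hZ' : q' ≤ Z) (K K' : Finset ℕ) (X Y : ℕ) :
    |∑ n ∈ Ioc X Y, sw R 1 n * (gK b q K n * gK b q' K' n)| ≤ 2 * (R:ℝ)^6 * Z^4 := by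
  rw [sw_expand]
  have hterm : ∀ d ∈ Icc 1 R, ∀ e ∈ Icc 1 R, |slam R 1 d * slam R 1 e *
      ∑ n ∈ (Ioc X Y).filter (fun n => d.lcm e ∣ n), gK b q K n * gK b q' K' n| ≤ 2 * (R:ℝ)^4 * Z^4 := by
    intro d hd e he
    rw [mem_Icc] at hd he
    have hl1 := abs_slam_le R 1 d (by omega)
    have hl2 := abs_slam_le R 1 e (by omega)
    have hdR : (d:ℝ) ≤ R := by exact_mod_cast hd.2
    have heR : (e:ℝ) ≤ R := by exact_mod_cast he.2
    have hqZ : (q:ℝ) ≤ Z := by exact_mod_cast hZ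
    have hqZ' : (q':ℝ) ≤ Z := by exact_mod_cast hZ'
    have hlp : 0 < d.lcm e := Nat.lcm_pos (by omega) (by omega)
    have hlle : ((d.lcm e : ℕ) : ℝ) ≤ R * R := by
      have : d.lcm e ≤ R * R := (Nat.le_of_dvd (Nat.mul_pos (by omega) (by omega)) (Nat.lcm_dvd_mul d e)).trans (Nat.mul_le_mul hd.2 he.2)
      exact_mod_cast this
    have hcorr := gK_corr b q q' hq hq' hb hb' hne K K' (d.lcm e) hlp X Y
    rw [abs_mul, abs_mul]
    calc _ ≤ (R:ℝ) * R * (2 * ((R*R:ℝ) * Z^2 * Z^2)) := by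
          have := hcorr.trans (show 2 * (((d.lcm e:ℕ):ℝ) * q^2 * q'^2) ≤ (2 * ((R*R:ℝ) * Z^2 * Z^2)) by gcongr)
          gcongr <;> linarith
      _ = _ := by ring
  calc _ ≤ ∑ d ∈ Icc 1 R, ∑ e ∈ Icc 1 R, |slam R 1 d * slam R 1 e *
      ∑ n ∈ (Ioc X Y).filter (fun n => d.lcm e ∣ n), gK b q K n * gK b q' K' n| := by
        refine (abs_sum_le_sum_abs _ _).trans (sum_le_sum fun d _ => abs_sum_le_sum_abs _ _)
    _ ≤ ∑ d ∈ Icc 1 R, ∑ e ∈ Icc 1 R, 2 * (R:ℝ)^4 * Z^4 := sum_le_sum fun d hd => sum_le_sum fun e he => hterm d hd e he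
    _ = _ := by
        simp only [sum_const, Nat.card_Icc, nsmul_eq_mul, Nat.add_sub_cancel]
        ring

lemma block (R Z X b : ℕ) (hR : 2 ≤ R) (Q : Finset ℕ) (hQ : ∀ q ∈ Q, q.Prime ∧ ¬ q ∣ b ∧ q ≤ Z)
    (A B : ℕ → ℕ) (hA : ∀ q ∈ Q, R ≤ A q) (hB : ∀ q ∈ Q, B q ≤ X) (K : ℕ → Finset ℕ) (W : ℝ)
    (hW : ∑ n ∈ Ioc 0 X, sw R 1 n ≤ W) :
    (∑ q ∈ Q, ∑ p ∈ (Ioc (A q) (B q)).filter Nat.Prime, gK b q (K q) p)^2 ≤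
      W * ((Q.card : ℝ) * W + (Q.card : ℝ)^2 * (2 * (R:ℝ)^6 * Z^4)) := by
  set P := (Ioc R X).filter Nat.Prime with hP
  set E : ℕ → ℝ := fun n => ∑ q ∈ Q, if n ∈ Ioc (A q) (B q) then gK b q (K q) n else 0 with hE
  have h1 : ∑ q ∈ Q, ∑ p ∈ (Ioc (A q) (B q)).filter Nat.Prime, gK b q (K q) p = ∑ p ∈ P, 1 * E p := by
    simp only [hE, one_mul]
    rw [sum_comm]
    refine sum_congr rfl fun q hq => ?_
    rw [← sum_filter]
    congr 1
    ext p
    have := hA q hq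
    have := hB q hq
    simp only [hP, mem_filter, mem_Ioc]
    constructor
    · rintro ⟨⟨h1, h2⟩, h3⟩; exact ⟨⟨⟨by omega, by omega⟩, h3⟩, h1, h2⟩
    · rintro ⟨⟨⟨h1, h2⟩, h3⟩, h4⟩; exact ⟨h4, h3⟩
  have hsw : ∀ p ∈ P, sw R 1 p = 1 := by
    intro p hp
    simp only [hP, mem_filter, mem_Ioc] at hp
    exact sw_prime R 1 p (by omega) hp.2 hp.1.1
  have hPsub : P ⊆ Ioc 0 X := by
    intro p hp
    simp only [hP, mem_filter, mem_Ioc] at hp ⊢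
    omega
  have h2 : ∑ p ∈ P, (1:ℝ)^2 ≤ W := by
    calc ∑ p ∈ P, (1:ℝ)^2 = ∑ p ∈ P, sw R 1 p := sum_congr rfl fun p hp => by rw [hsw p hp, one_pow]
      _ ≤ ∑ n ∈ Ioc 0 X, sw R 1 n := sum_le_sum_of_subset_of_nonneg hPsub fun _ _ _ => sw_nonneg _ _ _
      _ ≤ W := hW
  have hW0 : 0 ≤ W := (sum_nonneg fun _ _ => by positivity).trans h2
  have h3 : ∑ p ∈ P, (E p)^2 ≤ ∑ n ∈ Ioc 0 X, sw R 1 n * (E n)^2 := by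
    calc ∑ p ∈ P, (E p)^2 = ∑ p ∈ P, sw R 1 p * (E p)^2 := sum_congr rfl fun p hp => by rw [hsw p hp, one_mul]
      _ ≤ _ := sum_le_sum_of_subset_of_nonneg hPsub fun n _ _ => mul_nonneg (sw_nonneg _ _ _) (sq_nonneg _)
  have h4 : ∑ n ∈ Ioc 0 X, sw R 1 n * (E n)^2 = ∑ q ∈ Q, ∑ q' ∈ Q,
      ∑ n ∈ Ioc (max (A q) (A q')) (min (B q) (B q')), sw R 1 n * (gK b q (K q) n * gK b q' (K q') n) := by
    have : ∀ n ∈ Ioc 0 X, sw R 1 n * (E n)^2 = ∑ q ∈ Q, ∑ q' ∈ Q,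
        if n ∈ Ioc (max (A q) (A q')) (min (B q) (B q')) then sw R 1 n * (gK b q (K q) n * gK b q' (K q') n) else 0 := by
      intro n _
      simp only [hE]
      rw [sq, sum_mul_sum, mul_sum]
      refine sum_congr rfl fun q _ => ?_
      rw [mul_sum]
      refine sum_congr rfl fun q' _ => ?_
      have : n ∈ Ioc (max (A q) (A q')) (min (B q) (B q')) ↔ n ∈ Ioc (A q) (B q) ∧ n ∈ Ioc (A q') (B q') := by
        simp only [mem_Ioc, max_lt_iff, le_min_iff]; tauto
      by_cases ha : n ∈ Ioc (A q) (B q) <;> by_cases hb : n ∈ Ioc (A q') (B q') <;> simp only [this, ha, hb] <;> simp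
    rw [sum_congr rfl this, sum_comm]
    refine sum_congr rfl fun q hq => ?_
    rw [sum_comm]
    refine sum_congr rfl fun q' hq' => ?_
    rw [← sum_filter]
    congr 1
    ext n
    have := hB q hq
    simp only [mem_filter, mem_Ioc, max_lt_iff, le_min_iff]
    constructor
    · rintro ⟨_, h⟩; exact h
    · intro h; exact ⟨⟨by omega, by omega⟩, h⟩
  have h5 : ∀ q ∈ Q, ∀ q' ∈ Q, ∑ n ∈ Ioc (max (A q) (A q')) (min (B q) (B q')), sw R 1 n * (gK b q (K q) n * gK b q' (K q') n)
      ≤ (if q = q' then W else 0) + 2 * (R:ℝ)^6 * Z^4 := by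
    intro q hq q' hq'
    obtain ⟨a1, a2, a3⟩ := hQ q hq
    obtain ⟨b1, b2, b3⟩ := hQ q' hq'
    split_ifs with h
    · subst h
      have : ∑ n ∈ Ioc (max (A q) (A q)) (min (B q) (B q)), sw R 1 n * (gK b q (K q) n * gK b q (K q) n) ≤ W := by
        refine le_trans ?_ hW
        calc _ ≤ ∑ n ∈ Ioc (max (A q) (A q)) (min (B q) (B q)), sw R 1 n := by
              refine sum_le_sum fun n _ => ?_
              apply mul_le_of_le_one_right (sw_nonneg _ _ _)
              have := abs_gK_le b q a1 (K q) n
              rw [← abs_mul_abs_self]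
              exact mul_le_one₀ this (abs_nonneg _) this
          _ ≤ _ := by
              refine sum_le_sum_of_subset_of_nonneg ?_ fun _ _ _ => sw_nonneg _ _ _
              intro n hn
              have := hB q hq
              simp only [mem_Ioc, max_self, min_self] at hn ⊢
              omega
      have : (0:ℝ) ≤ 2 * (R:ℝ)^6 * Z^4 := by positivity
      linarith
    · rw [zero_add]
      exact (le_abs_self _).trans (offdiag R Z b q q' hR a1 b1 a2 b2 h a3 b3 _ _ _ _)
  have h6 : ∑ n ∈ Ioc 0 X, sw R 1 n * (E n)^2 ≤ (Q.card : ℝ) * W + (Q.card : ℝ)^2 * (2 * (R:ℝ)^6 * Z^4) := by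
    rw [h4]
    refine (sum_le_sum fun q hq => sum_le_sum fun q' hq' => h5 q hq q' hq').trans ?_
    simp only [sum_add_distrib, sum_const, nsmul_eq_mul, sum_ite_eq]
    have : ∑ q ∈ Q, (if q ∈ Q then W else 0) = (Q.card:ℝ) * W := by
      rw [sum_congr rfl (fun q hq => if_pos hq), sum_const, nsmul_eq_mul]
    rw [this]
    apply le_of_eq; ring
  rw [h1]
  refine (sum_mul_sq_le_sq_mul_sq P (fun _ => 1) E).trans ?_
  have hE0 : 0 ≤ ∑ p ∈ P, (E p)^2 := sum_nonneg fun _ _ => sq_nonneg _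
  exact mul_le_mul h2 (h3.trans h6) hE0 hW0

lemma pow_mod_val (b p q : ℕ) (hp : p.Prime) (hq : q.Prime) (hbp : b ^ q < p) (hqp : q < p) :
    b ^ (p * q) % (p * q) = b ^ q + p * (((b : ZMod q)^p - b) * (p : ZMod q)⁻¹).val := by
  have := Fact.mk hp
  have := Fact.mk hq
  set k := (((b : ZMod q)^p - b) * (p : ZMod q)⁻¹).val with hk
  have hkq : k < q := ZMod.val_lt _
  have hlt : b ^ q + p * k < p * q := by
    have : p * (k + 1) ≤ p * q := Nat.mul_le_mul_left _ hkq
    rw [mul_add, mul_one] at this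
    omega
  have hcop : p.Coprime q := (Nat.coprime_primes hp hq).2 hqp.ne'
  have hp0 : (p : ZMod q) ≠ 0 := by
    rw [Ne, ZMod.natCast_eq_zero_iff]
    intro h
    exact hqp.ne ((Nat.prime_dvd_prime_iff_eq hq hp).1 h)
  have h1 : b ^ (p * q) ≡ b ^ q + p * k [MOD p] := by
    rw [← ZMod.natCast_eq_natCast_iff]
    push_cast
    rw [mul_comm p q, pow_mul, ZMod.pow_card]
    simp
  have h2 : b ^ (p * q) ≡ b ^ q + p * k [MOD q] := by
    rw [← ZMod.natCast_eq_natCast_iff]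
    push_cast
    rw [pow_mul, ZMod.pow_card, hk, ZMod.natCast_val, ZMod.cast_id', id_eq, ZMod.pow_card]
    field_simp
    ring
  have h3 : b ^ (p * q) ≡ b ^ q + p * k [MOD (p * q)] :=
    (Nat.modEq_and_modEq_iff_modEq_mul hcop).1 ⟨h1, h2⟩
  rw [h3, Nat.mod_eq_of_lt hlt]

noncomputable def K1 (r : ℝ) (q : ℕ) : Finset ℕ := by
  classical exact (range q).filter (fun k => (k:ℝ) ≤ r * q)
noncomputable def K0 (r : ℝ) (q : ℕ) : Finset ℕ := by
  classical exact (range q).filter (fun k => (k:ℝ) + 1 ≤ r * q)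

lemma gc_K1 (r : ℝ) (hr : 0 < r) (q : ℕ) (hq : q.Prime) : gc q (K1 r q) ≤ r + 2/q := by
  classical
  have h2 : (2:ℝ) ≤ q := by exact_mod_cast hq.two_le
  have hm : (((Ico 1 q).filter (fun k => k ∈ K1 r q)).card : ℝ) ≤ r * q := by
    have : ((Ico 1 q).filter (fun k => k ∈ K1 r q)) ⊆ Icc 1 ⌊r * q⌋₊ := by
      intro k hk
      simp only [K1, mem_filter, mem_Ico, mem_Icc] at hk ⊢
      exact ⟨hk.1.1, Nat.le_floor hk.2.2⟩
    have h := card_le_card this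
    rw [Nat.card_Icc, Nat.add_sub_cancel] at h
    exact le_trans (by exact_mod_cast h) (Nat.floor_le (by positivity))
  have hm2 : (((Ico 1 q).filter (fun k => k ∈ K1 r q)).card : ℝ) ≤ q - 1 := by
    have := (card_filter_le (Ico 1 q) (fun k => k ∈ K1 r q))
    rw [Nat.card_Ico] at this
    have h := (Nat.cast_le (α := ℝ)).2 this
    rwa [Nat.cast_sub hq.one_lt.le, Nat.cast_one] at h
  unfold gc
  set m := (((Ico 1 q).filter (fun k => k ∈ K1 r q)).card : ℝ)
  have : m / ((q:ℝ) - 1) = m / q + (m / (q - 1)) / q := by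
    have : (q:ℝ) - 1 ≠ 0 := by linarith
    field_simp
    ring
  rw [this]
  have h3 : m / (q - 1) ≤ 1 := by rw [div_le_one (by linarith)]; exact hm2
  have h4 : m / q ≤ r := by rw [div_le_iff₀ (by linarith)]; exact hm
  have h5 : m / (q - 1) / q ≤ 2 / q := by gcongr; linarith
  linarith

lemma gc_K0 (r : ℝ) (hr : 0 < r) (hr1 : r ≤ 1) (q : ℕ) (hq : q.Prime) : r - 2/q ≤ gc q (K0 r q) := by
  classical
  have h2 : (2:ℝ) ≤ q := by exact_mod_cast hq.two_le
  have hm : r * q - 2 ≤ (((Ico 1 q).filter (fun k => k ∈ K0 r q)).card : ℝ) := by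
    have : Ico 1 ⌊r * q⌋₊ ⊆ ((Ico 1 q).filter (fun k => k ∈ K0 r q)) := by
      intro k hk
      simp only [K0, mem_filter, mem_Ico, mem_range] at hk ⊢
      have h1 : ((⌊r * q⌋₊ : ℕ) : ℝ) ≤ r * q := Nat.floor_le (by positivity)
      have h3 : (k:ℝ) + 1 ≤ r * q := le_trans (by exact_mod_cast hk.2) h1
      have h4 : k < q := by
        have : (k:ℝ) < q := by nlinarith
        exact_mod_cast this
      exact ⟨⟨hk.1, h4⟩, h4, h3⟩
    have h := card_le_card this
    rw [Nat.card_Ico] at h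
    have h' : ⌊r * q⌋₊ ≤ ((Ico 1 q).filter (fun k => k ∈ K0 r q)).card + 1 := by omega
    have hdbl : ((⌊r * q⌋₊ : ℕ) : ℝ) ≤ (((Ico 1 q).filter (fun k => k ∈ K0 r q)).card : ℝ) + 1 := by exact_mod_cast h'
    have := Nat.lt_floor_add_one (r * q)
    linarith
  unfold gc
  set m := (((Ico 1 q).filter (fun k => k ∈ K0 r q)).card : ℝ)
  have hm0 : 0 ≤ m := by positivity
  have h3 : m / q ≤ m / (q - 1) := by
    apply div_le_div_of_nonneg_left hm0 <;> linarith
  have h4 : (r * q - 2) / q ≤ m / q := by gcongr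
  have h5 : (r * q - 2) / q = r - 2 / q := by field_simp
  linarith

noncomputable def hh (b q p : ℕ) : ℝ := by
  classical exact if (b : ZMod q)^p = b then 1 else 0

open scoped Classical in
lemma pointwise (b p q : ℕ) (hp : p.Prime) (hq : q.Prime) (hbp : b ^ q < p) (hqp : q < p)
    (r : ℝ) (hr : 0 < r) (hr1 : r ≤ 1) :
    (if ((b ^ (p * q) % (p * q) : ℕ) : ℝ) / ((p * q : ℕ) : ℝ) ≤ r then (1:ℝ) else 0) - r ≤ gK b q (K1 r q) p + 2/q + hh b q p ∧
    gK b q (K0 r q) p - 2/q - hh b q p ≤ (if ((b ^ (p * q) % (p * q) : ℕ) : ℝ) / ((p * q : ℕ) : ℝ) ≤ r then (1:ℝ) else 0) - r := by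
  have := Fact.mk hq
  have hp0 : (p : ZMod q) ≠ 0 := by
    rw [Ne, ZMod.natCast_eq_zero_iff]
    intro h
    exact hqp.ne ((Nat.prime_dvd_prime_iff_eq hq hp).1 h)
  have hq2 : (2:ℝ) ≤ q := by exact_mod_cast hq.two_le
  have hqi : (0:ℝ) ≤ 2/q := by positivity
  by_cases hb : (b : ZMod q)^p = b
  · have h1 : ∀ K, gK b q K p = 0 := by intro K; unfold gK; rw [if_pos (Or.inr hb)]
    have h2 : hh b q p = 1 := by unfold hh; rw [if_pos hb]
    rw [h1, h1, h2]
    split_ifs <;> constructor <;> linarith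
  · have h2 : hh b q p = 0 := by unfold hh; rw [if_neg hb]
    set k := (((b : ZMod q)^p - b) * (p : ZMod q)⁻¹).val with hk
    have hkq : k < q := ZMod.val_lt _
    have h1 : ∀ K, gK b q K p = (if k ∈ K then 1 else 0) - gc q K := by
      intro K; unfold gK; rw [if_neg (by tauto)]
    rw [h1, h1, h2, pow_mod_val b p q hp hq hbp hqp, ← hk]
    have hpR : (0:ℝ) < p := by exact_mod_cast hp.pos
    have hbpR : ((b:ℝ)^q) < p := by exact_mod_cast hbp
    have hb0 : (0:ℝ) ≤ (b:ℝ)^q := by positivity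
    have hqR : (0:ℝ) < q := by linarith
    have hiff : ((b ^ q + p * k : ℕ) : ℝ) / ((p * q : ℕ) : ℝ) ≤ r ↔ (b:ℝ)^q + p * k ≤ p * (r * q) := by
      push_cast
      rw [div_le_iff₀ (by positivity)]
      rw [show r * ((p:ℝ) * q) = p * (r * q) by ring]
    have hK1 : (b:ℝ)^q + p * k ≤ p * (r * q) → k ∈ K1 r q := by
      intro h
      simp only [K1, mem_filter, mem_range]
      refine ⟨hkq, ?_⟩
      have : (p:ℝ) * k ≤ p * (r * q) := by linarith
      exact le_of_mul_le_mul_left this hpR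
    have hK0 : k ∈ K0 r q → (b:ℝ)^q + p * k ≤ p * (r * q) := by
      intro h
      simp only [K0, mem_filter, mem_range] at h
      have := mul_le_mul_of_nonneg_left h.2 hpR.le
      linarith
    have g1 := gc_K1 r hr q hq
    have g0 := gc_K0 r hr hr1 q hq
    simp only [hiff]
    constructor
    · by_cases h : (b:ℝ)^q + p * k ≤ p * (r * q)
      · rw [if_pos h, if_pos (hK1 h)]; linarith
      · rw [if_neg h]; split_ifs <;> linarith
    · by_cases h : k ∈ K0 r q
      · rw [if_pos h, if_pos (hK0 h)]; linarith
      · rw [if_neg h]; split_ifs <;> linarith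

def Pq (b N q : ℕ) : Finset ℕ := (Ioc (b^q) (N/q)).filter Nat.Prime
def Qs (N : ℕ) : Finset ℕ := (Icc 1 (Nat.log 2 N)).filter Nat.Prime

open scoped Classical in
lemma setAN_filter_card (b N : ℕ) (hb : 2 ≤ b) (pr : ℕ → Prop) :
    ((setAN b N).filter pr).card = ∑ q ∈ Qs N, ((Pq b N q).filter (fun p => pr (p * q))).card := by
  have hlt : ∀ q, q < b ^ q := fun q => Nat.lt_pow_self (by omega)
  rw [← card_sigma]
  symm
  apply card_bij (fun (x : (_ : ℕ) × ℕ) _ => x.2 * x.1)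
  · rintro ⟨q, p⟩ h
    simp only [mem_sigma, Qs, Pq, mem_filter, mem_Icc, mem_Ioc] at h
    obtain ⟨⟨⟨h1, h2⟩, hq⟩, ⟨⟨h3, h4⟩, hp⟩, h5⟩ := h
    simp only [setAN, mem_filter, mem_Icc]
    refine ⟨⟨⟨Nat.mul_pos hp.pos hq.pos, ?_⟩, p, q, hp, hq, h3, rfl⟩, h5⟩
    exact (Nat.le_div_iff_mul_le hq.pos).1 h4
  · rintro ⟨q, p⟩ h ⟨q', p'⟩ h' heq
    simp only [mem_sigma, Qs, Pq, mem_filter, mem_Icc, mem_Ioc] at h h'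
    obtain ⟨⟨⟨h1, h2⟩, hq⟩, ⟨⟨h3, h4⟩, hp⟩, h5⟩ := h
    obtain ⟨⟨⟨h1', h2'⟩, hq'⟩, ⟨⟨h3', h4'⟩, hp'⟩, h5'⟩ := h'
    simp only at heq
    have a1 := hlt q
    have a2 := hlt q'
    have d1 : p ∣ p' * q' := heq ▸ Dvd.intro _ rfl
    have d2 : p' ∣ p * q := heq ▸ Dvd.intro _ rfl
    have hpp : p = p' := by
      rcases (Nat.Prime.dvd_mul hp).1 d1 with d | d
      · exact (Nat.prime_dvd_prime_iff_eq hp hp').1 d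
      · have e1 := (Nat.prime_dvd_prime_iff_eq hp hq').1 d
        rcases (Nat.Prime.dvd_mul hp').1 d2 with d | d
        · exact ((Nat.prime_dvd_prime_iff_eq hp' hp).1 d).symm
        · have e2 := (Nat.prime_dvd_prime_iff_eq hp' hq).1 d
          omega
    subst hpp
    have : q = q' := Nat.eq_of_mul_eq_mul_left hp.pos heq
    subst this
    rfl
  · intro n hn
    simp only [setAN, mem_filter, mem_Icc] at hn
    obtain ⟨⟨⟨h1, h2⟩, p, q, hp, hq, hlt2, rfl⟩, h5⟩ := hn
    refine ⟨⟨q, p⟩, ?_, rfl⟩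
    simp only [mem_sigma, Qs, Pq, mem_filter, mem_Icc, mem_Ioc]
    have h6 : p ≤ N / q := (Nat.le_div_iff_mul_le hq.pos).2 h2
    have h7 : 2 ^ q ≤ N := by
      have := Nat.pow_le_pow_left hb q
      have := Nat.div_le_self N q
      omega
    exact ⟨⟨⟨hq.pos, Nat.le_log_of_pow_le (by norm_num) h7⟩, hq⟩, ⟨⟨hlt2, h6⟩, hp⟩, h5⟩

lemma setAN_card (b N : ℕ) (hb : 2 ≤ b) :
    (setAN b N).card = ∑ q ∈ Qs N, (Pq b N q).card := by
  classical
  have := setAN_filter_card b N hb (fun _ => True)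
  simpa using this

/-- error terms -/
lemma main_error (b N : ℕ) (hb : 2 ≤ b) (r : ℝ) (hr : 0 < r) (hr1 : r ≤ 1) (G T1 T2 T3 : ℝ)
    (hG : ∀ K : ℕ → Finset ℕ, |∑ q ∈ (Qs N).filter (fun q => b < q), ∑ p ∈ Pq b N q, gK b q (K q) p| ≤ G)
    (h1 : ∑ q ∈ Qs N, (2/q:ℝ) * (Pq b N q).card ≤ T1)
    (h2 : ∑ q ∈ (Qs N).filter (fun q => b < q), ∑ p ∈ Pq b N q, hh b q p ≤ T2)
    (h3 : ∑ q ∈ (Qs N).filter (fun q => ¬ b < q), ((Pq b N q).card : ℝ) ≤ T3) :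
    |((((setAN b N).filter fun n => ((b ^ n % n : ℕ) : ℝ) / n ≤ r).card : ℝ)) - r * (setAN b N).card| ≤ G + T1 + T2 + T3 := by
  classical
  set I : ℕ → ℕ → ℝ := fun q p => (if ((b ^ (p * q) % (p * q) : ℕ) : ℝ) / ((p * q : ℕ) : ℝ) ≤ r then (1:ℝ) else 0) - r with hI
  have e1 : ((((setAN b N).filter fun n => ((b ^ n % n : ℕ) : ℝ) / n ≤ r).card : ℝ)) - r * (setAN b N).card
      = ∑ q ∈ Qs N, ∑ p ∈ Pq b N q, I q p := by
    have h := setAN_filter_card b N hb (fun n => ((b ^ n % n : ℕ) : ℝ) / n ≤ r)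
    have h' := setAN_card b N hb
    have hdbl : (((setAN b N).filter fun n => ((b ^ n % n : ℕ) : ℝ) / n ≤ r).card : ℝ) = ∑ q ∈ Qs N, (((Pq b N q).filter (fun p => ((b ^ (p * q) % (p * q) : ℕ) : ℝ) / ((p * q : ℕ) : ℝ) ≤ r)).card : ℝ) := by
      rw [← Nat.cast_sum, ← h]
    rw [hdbl, h', Nat.cast_sum, mul_sum, ← sum_sub_distrib]
    refine sum_congr rfl fun q _ => ?_
    simp only [hI]
    rw [sum_sub_distrib, sum_const, nsmul_eq_mul, sum_boole, mul_comm r]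
  rw [e1]
  rw [← sum_filter_add_sum_filter_not (Qs N) (fun q => b < q)]
  have hlt : ∀ q, q < b ^ q := fun q => Nat.lt_pow_self (by omega)
  have hpt : ∀ q ∈ Qs N, ∀ p ∈ Pq b N q, I q p ≤ gK b q (K1 r q) p + 2/q + hh b q p ∧
      gK b q (K0 r q) p - 2/q - hh b q p ≤ I q p := by
    intro q hq p hp
    simp only [Qs, Pq, mem_filter, mem_Ioc] at hq hp
    have := hlt q
    exact pointwise b p q hp.2 hq.2 hp.1.1 (by omega) r hr hr1
  have hs : |∑ q ∈ (Qs N).filter (fun q => ¬ b < q), ∑ p ∈ Pq b N q, I q p| ≤ T3 := by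
    refine le_trans ?_ h3
    refine (abs_sum_le_sum_abs _ _).trans (sum_le_sum fun q _ => (abs_sum_le_sum_abs _ _).trans ?_)
    rw [card_eq_sum_ones]
    push_cast
    refine sum_le_sum fun p _ => ?_
    simp only [hI]
    split_ifs <;> rw [abs_le] <;> constructor <;> linarith
  have h1' : ∑ q ∈ (Qs N).filter (fun q => b < q), ∑ p ∈ Pq b N q, (2/q:ℝ) ≤ T1 := by
    refine le_trans ?_ h1
    simp only [sum_const, nsmul_eq_mul, mul_comm]
    apply sum_le_sum_of_subset_of_nonneg (filter_subset _ _)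
    intros; positivity
  have hu : ∑ q ∈ (Qs N).filter (fun q => b < q), ∑ p ∈ Pq b N q, I q p ≤ G + T1 + T2 := by
    calc _ ≤ ∑ q ∈ (Qs N).filter (fun q => b < q), ∑ p ∈ Pq b N q, (gK b q (K1 r q) p + 2/q + hh b q p) :=
          sum_le_sum fun q hq => sum_le_sum fun p hp => (hpt q (mem_filter.1 hq).1 p hp).1
      _ ≤ _ := by
          simp only [sum_add_distrib]
          have := (abs_le.1 (hG (K1 r))).2
          linarith
  have hl : -(G + T1 + T2) ≤ ∑ q ∈ (Qs N).filter (fun q => b < q), ∑ p ∈ Pq b N q, I q p := by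
    calc _ ≤ ∑ q ∈ (Qs N).filter (fun q => b < q), ∑ p ∈ Pq b N q, (gK b q (K0 r q) p - 2/q - hh b q p) := by
          simp only [sum_sub_distrib]
          have := (abs_le.1 (hG (K0 r))).1
          linarith
      _ ≤ _ := sum_le_sum fun q hq => sum_le_sum fun p hp => (hpt q (mem_filter.1 hq).1 p hp).2
  rw [abs_le] at hs ⊢
  constructor <;> linarith

structure Par (N R : ℕ) : Prop where
  hR : 2 ≤ R
  hlog0 : 0 < Real.log N
  hlog : Real.log N ≤ 40 * Real.log R
  hL : 1 ≤ Nat.log 2 N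
  hE : (R:ℝ)^8 * (Nat.log 2 N : ℝ)^10 ≤ N / Real.log N

lemma Par.err {N R : ℕ} (h : Par N R) (i j : ℕ) (hi : i ≤ 8) (hj : j ≤ 10) :
    (R:ℝ)^i * (Nat.log 2 N : ℝ)^j ≤ N / Real.log N := by
  refine le_trans ?_ h.hE
  have h1 : (1:ℝ) ≤ R := by exact_mod_cast (le_trans (by norm_num) h.hR)
  have h2 : (1:ℝ) ≤ (Nat.log 2 N : ℝ) := by exact_mod_cast h.hL
  have := pow_le_pow_right₀ h1 hi
  have := pow_le_pow_right₀ h2 hj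
  gcongr

lemma Par.two_div {N R : ℕ} (h : Par N R) : 2 / Real.log R ≤ 80 / Real.log N := by
  have h0 := h.hlog0
  have h1 := h.hlog
  rw [div_le_div_iff₀ (by linarith) h0]
  linarith

lemma Par.U_nonneg {N R : ℕ} (h : Par N R) : 0 ≤ N / Real.log N := by
  have := h.hlog0
  positivity

lemma mem_Qs {N q : ℕ} (hq : q ∈ Qs N) : q.Prime ∧ 1 ≤ q ∧ q ≤ Nat.log 2 N := by
  simp only [Qs, mem_filter, mem_Icc] at hq
  exact ⟨hq.2, hq.1.1, hq.1.2⟩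

/-- general counting bound for primes congruent to one -/
lemma count_one (N R q k : ℕ) (h : Par N R) (hq : 0 < q) (hk : 1 ≤ k) (S : Finset ℕ)
    (hS : ∀ p ∈ S, 0 < p ∧ p ≤ N / q ∧ p.Prime ∧ p ≡ 1 [MOD k]) :
    (S.card : ℝ) ≤ 80 * (N / Real.log N) * ((1 + Real.log k) / (q * k)) + 2 * (R:ℝ)^4 := by
  have hsub : S ⊆ Ioc 0 R ∪ (Ioc R (N/q)).filter (fun p => p.Prime ∧ p ≡ 1 [MOD k]) := by
    intro p hp
    obtain ⟨h1, h2, h3, h4⟩ := hS p hp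
    simp only [mem_union, mem_filter, mem_Ioc]
    by_cases hpr : p ≤ R
    · left; omega
    · right; exact ⟨⟨by omega, h2⟩, h3, h4⟩
  have hc := (card_le_card hsub).trans (card_union_le _ _)
  rw [Nat.card_Ioc, Nat.sub_zero] at hc
  have hc' : (S.card : ℝ) ≤ R + (((Ioc R (N/q)).filter (fun p => p.Prime ∧ p ≡ 1 [MOD k])).card : ℝ) := by
    exact_mod_cast hc
  have hbt := sieve_titch R k (N/q) h.hR hk
  have h1 : (1:ℝ) ≤ R := by exact_mod_cast (le_trans (by norm_num) h.hR)
  have h2 : (R:ℝ) ≤ (R:ℝ)^4 := le_self_pow₀ h1 (by norm_num)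
  have hk' : (1:ℝ) ≤ k := by exact_mod_cast hk
  have hq' : (0:ℝ) < q := by exact_mod_cast hq
  have hlk : 0 ≤ Real.log k := Real.log_nonneg hk'
  have h3 : (((N/q : ℕ) : ℝ) / k) * (2 * (1 + Real.log k) / Real.log R) ≤ 80 * (N / Real.log N) * ((1 + Real.log k) / (q * k)) := by
    have a1 : ((N/q : ℕ) : ℝ) ≤ N / q := Nat.cast_div_le
    have a2 := h.two_div
    have a3 : 2 * (1 + Real.log k) / Real.log R = (2 / Real.log R) * (1 + Real.log k) := by ring
    rw [a3]
    have h0 := h.hlog0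
    have hlR : 0 ≤ 2 / Real.log R := by
      have := h.hlog
      have : 0 < Real.log R := by linarith
      positivity
    calc _ ≤ ((N / q : ℝ) / k) * ((80 / Real.log N) * (1 + Real.log k)) := by gcongr
      _ = _ := by field_simp
  linarith

lemma Pq_card_le (b N R q : ℕ) (h : Par N R) (hq : q ∈ Qs N) :
    ((Pq b N q).card : ℝ) ≤ 82 * (N / Real.log N) / q := by
  obtain ⟨h1, h2, h3⟩ := mem_Qs hq
  have hc := count_one N R q 1 h h2 le_rfl (Pq b N q) (by
    intro p hp
    simp only [Pq, mem_filter, mem_Ioc] at hp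
    exact ⟨hp.2.pos, hp.1.2, hp.2, Nat.modEq_one⟩)
  have he := h.err 4 1 (by norm_num) (by norm_num)
  have hq' : (0:ℝ) < q := by exact_mod_cast h2
  have hqL : (q:ℝ) ≤ (Nat.log 2 N : ℝ) := by exact_mod_cast h3
  have : (R:ℝ)^4 ≤ (N / Real.log N) / q := by
    rw [le_div_iff₀ hq']
    refine le_trans ?_ he
    rw [pow_one]
    gcongr
  simp only [Nat.cast_one, Real.log_one, add_zero, mul_one] at hc
  calc _ ≤ _ := hc
    _ ≤ 80 * (N / Real.log N) * (1 / q) + 2 * ((N / Real.log N) / q) := by gcongr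
    _ = _ := by ring

lemma T1_le (b N R : ℕ) (h : Par N R) :
    ∑ q ∈ Qs N, (2/q:ℝ) * (Pq b N q).card ≤ 328 * (N / Real.log N) := by
  have hU := h.U_nonneg
  calc _ ≤ ∑ q ∈ Qs N, (164 * (N / Real.log N)) * (1/(q:ℝ)^2) := by
        refine sum_le_sum fun q hq => ?_
        have := Pq_card_le b N R q h hq
        have hq' : (0:ℝ) < q := by exact_mod_cast (mem_Qs hq).2.1
        calc _ ≤ (2/q:ℝ) * (82 * (N / Real.log N) / q) := by gcongr
          _ = _ := by field_simp; ring
    _ = (164 * (N / Real.log N)) * ∑ q ∈ Qs N, (1/(q:ℝ)^2) := by rw [mul_sum]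
    _ ≤ (164 * (N / Real.log N)) * 2 := by
        gcongr
        refine le_trans ?_ (sum_inv_sq_le' (Nat.log 2 N))
        apply sum_le_sum_of_subset_of_nonneg (filter_subset _ _)
        intros; positivity
    _ = _ := by ring

lemma T3_le (b N R : ℕ) (h : Par N R) :
    ∑ q ∈ (Qs N).filter (fun q => ¬ b < q), ((Pq b N q).card : ℝ) ≤ 82 * b * (N / Real.log N) := by
  have hU := h.U_nonneg
  calc _ ≤ ∑ q ∈ (Qs N).filter (fun q => ¬ b < q), (82 * (N / Real.log N)) := by
        refine sum_le_sum fun q hq => ?_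
        have hq := (mem_filter.1 hq).1
        have := Pq_card_le b N R q h hq
        have hq' : (1:ℝ) ≤ q := by exact_mod_cast (mem_Qs hq).2.1
        refine this.trans (div_le_self (by positivity) hq')
    _ = (((Qs N).filter (fun q => ¬ b < q)).card : ℝ) * (82 * (N / Real.log N)) := by rw [sum_const, nsmul_eq_mul]
    _ ≤ (b:ℝ) * (82 * (N / Real.log N)) := by
        gcongr
        have : (Qs N).filter (fun q => ¬ b < q) ⊆ Icc 1 b := by
          intro q hq
          have h1 := mem_filter.1 hq
          have := (mem_Qs h1.1).2.1
          rw [mem_Icc]; omega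
        simpa using card_le_card this
    _ = _ := by ring

lemma fiber_sum (b d : ℕ) (hb : 2 ≤ b) (hd : 1 ≤ d) (S : Finset ℕ)
    (hS : ∀ q ∈ S, q.Prime ∧ b < q ∧ orderOf (b : ZMod q) = d) :
    ∑ q ∈ S, (1:ℝ)/q ≤ (2 + Real.log d) / d := by
  have hdiv : ∀ q ∈ S, q ∣ b^d - 1 := by
    intro q hq
    obtain ⟨h1, h2, h3⟩ := hS q hq
    have h4 : (b : ZMod q)^d = 1 := by rw [← h3]; exact pow_orderOf_eq_one _
    rw [← ZMod.natCast_eq_zero_iff, Nat.cast_sub (Nat.one_le_pow _ _ (by omega))]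
    push_cast
    rw [h4, sub_self]
  have hdq : ∀ q ∈ S, d ∣ q - 1 := by
    intro q hq
    obtain ⟨h1, h2, h3⟩ := hS q hq
    have := Fact.mk h1
    rw [← h3]
    apply orderOf_dvd_of_pow_eq_one
    apply ZMod.pow_card_sub_one_eq_one
    rw [Ne, ZMod.natCast_eq_zero_iff]
    exact Nat.not_dvd_of_pos_of_lt (by omega) h2
  have hcard : S.card ≤ d := by
    have hp : ∏ q ∈ S, q ∣ b^d - 1 := by
      apply Finset.prod_primes_dvd
      · intro q hq; exact (hS q hq).1.prime
      · exact hdiv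
    have h1 : b^S.card ≤ ∏ q ∈ S, q := by
      rw [← Finset.prod_const]
      exact Finset.prod_le_prod' fun q hq => (hS q hq).2.1.le
    have hpos : 1 < b^d := Nat.one_lt_pow (by omega) (by omega)
    have h2 := Nat.le_of_dvd (by omega) hp
    have h3 : b^S.card ≤ b^d := by omega
    exact (Nat.pow_le_pow_iff_right (by omega)).1 h3
  have hdR : (0:ℝ) < d := by exact_mod_cast hd
  set j : ℕ → ℕ := fun q => (q-1)/d with hj
  have hjq : ∀ q ∈ S, q = d * j q + 1 := by
    intro q hq
    have := Nat.mul_div_cancel' (hdq q hq)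
    have := (hS q hq).1.two_le
    simp only [hj]; omega
  have hjpos : ∀ q ∈ S, 1 ≤ j q := by
    intro q hq
    have h1 := hjq q hq
    have := (hS q hq).1.two_le
    rcases Nat.eq_zero_or_pos (j q) with h0 | h0
    · rw [h0] at h1; omega
    · exact h0
  have hinj : Set.InjOn j S := by
    intro q hq q' hq' he
    rw [hjq q hq, hjq q' hq', he]
  have h1 : ∑ q ∈ S, (1:ℝ)/q ≤ ∑ q ∈ S, (1/(d:ℝ)) * (1/(j q : ℝ)) := by
    refine sum_le_sum fun q hq => ?_
    have a := hjq q hq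
    have b1 : (0:ℝ) < j q := by exact_mod_cast hjpos q hq
    have a' : (q:ℝ) = d * j q + 1 := by exact_mod_cast a
    rw [div_mul_div_comm, one_mul, a']
    gcongr
    linarith
  have h2 : ∑ q ∈ S, (1/(j q : ℝ)) = ∑ i ∈ S.image j, (1/(i:ℝ)) := by rw [sum_image hinj]
  have h3 : ∑ i ∈ S.image j, (1/(i:ℝ)) ≤ 2 + Real.log d := by
    calc ∑ i ∈ S.image j, (1/(i:ℝ)) ≤ ∑ i ∈ S.image j, ((if i ∈ Icc 1 d then 1/(i:ℝ) else 0) + 1/d) := by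
          refine sum_le_sum fun i hi => ?_
          obtain ⟨q, hq, rfl⟩ := mem_image.1 hi
          have := hjpos q hq
          split_ifs with hm
          · have : (0:ℝ) ≤ 1/d := by positivity
            linarith
          · rw [mem_Icc] at hm
            have : d ≤ j q := by omega
            rw [zero_add]
            gcongr
      _ = ∑ i ∈ (S.image j).filter (fun i => i ∈ Icc 1 d), 1/(i:ℝ) + ((S.image j).card : ℝ) * (1/d) := by
          rw [sum_add_distrib, sum_const, nsmul_eq_mul, ← sum_filter]
      _ ≤ ∑ i ∈ Icc 1 d, 1/(i:ℝ) + d * (1/d) := by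
          gcongr
          · intro i hi; exact (mem_filter.1 hi).2
          · exact card_image_le.trans hcard
      _ ≤ (1 + Real.log d) + 1 := by
          have := harmonic_le_one_add_log d
          rw [harmonic_eq_sum_Icc] at this
          push_cast at this
          simp only [one_div]
          rw [mul_inv_cancel₀ hdR.ne']
          linarith
      _ = _ := by ring
  rw [← mul_sum, h2] at h1
  refine h1.trans ?_
  rw [one_div, inv_mul_eq_div]
  gcongr

lemma order_sum (b : ℕ) (hb : 2 ≤ b) : ∃ C : ℝ, 0 ≤ C ∧ ∀ S : Finset ℕ, (∀ q ∈ S, q.Prime ∧ b < q) →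
    ∑ q ∈ S, (1 + Real.log (orderOf (b : ZMod q))) / (q * (orderOf (b : ZMod q) : ℝ)) ≤ C := by
  have hsum : Summable (fun d : ℕ => 36 * (1 / (d:ℝ)^(3/2:ℝ))) :=
    (Real.summable_one_div_nat_rpow.2 (by norm_num)).mul_left 36
  refine ⟨∑' d : ℕ, 36 * (1 / (d:ℝ)^(3/2:ℝ)), tsum_nonneg fun d => by positivity, ?_⟩
  intro S hS
  set o : ℕ → ℕ := fun q => orderOf (b : ZMod q) with ho
  have hopos : ∀ q ∈ S, 1 ≤ o q := by
    intro q hq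
    obtain ⟨h1, h2⟩ := hS q hq
    have := Fact.mk h1
    have : (b : ZMod q)^(q-1) = 1 := by
      apply ZMod.pow_card_sub_one_eq_one
      rw [Ne, ZMod.natCast_eq_zero_iff]
      exact Nat.not_dvd_of_pos_of_lt (by omega) h2
    have := orderOf_pos_iff.2 (isOfFinOrder_iff_pow_eq_one.2 ⟨q-1, by have := h1.two_le; omega, this⟩)
    exact this
  rw [← sum_fiberwise_of_maps_to (s := S) (t := S.image o) (g := o) (fun q hq => mem_image_of_mem o hq)]
  refine le_trans (sum_le_sum (g := fun d : ℕ => 36 * (1 / (d:ℝ)^(3/2:ℝ))) fun d hd => ?_)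
    (hsum.sum_le_tsum _ (fun d _ => by positivity))
  obtain ⟨q0, hq0, rfl⟩ := mem_image.1 hd
  have hd1 := hopos q0 hq0
  set d := o q0 with hdd
  have hdR : (1:ℝ) ≤ d := by exact_mod_cast hd1
  have hl0 : 0 ≤ Real.log d := Real.log_nonneg hdR
  have hf := fiber_sum b d hb hd1 (S.filter (fun q => o q = d)) (by
    intro q hq
    obtain ⟨h1, h2⟩ := mem_filter.1 hq
    exact ⟨(hS q h1).1, (hS q h1).2, h2⟩)
  have e : ∑ q ∈ S.filter (fun q => o q = d), (1 + Real.log (orderOf (b : ZMod q))) / (q * (orderOf (b : ZMod q) : ℝ))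
      = ((1 + Real.log d)/d) * ∑ q ∈ S.filter (fun q => o q = d), (1:ℝ)/q := by
    rw [mul_sum]
    refine sum_congr rfl fun q hq => ?_
    have : orderOf (b : ZMod q) = d := (mem_filter.1 hq).2
    rw [this]
    rw [div_mul_div_comm, mul_one, mul_comm (q:ℝ)]
  rw [e]
  have hlog : Real.log d ≤ (d:ℝ)^(1/4:ℝ) / (1/4) := Real.log_le_rpow_div (by positivity) (by norm_num)
  set x := (d:ℝ)^(1/4:ℝ) with hx
  have hx1 : 1 ≤ x := Real.one_le_rpow hdR (by norm_num)
  calc _ ≤ ((1 + Real.log d)/d) * ((2 + Real.log d)/d) := by gcongr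
    _ ≤ ((6 * x)/d) * ((6*x)/d) := by
        have : 2 + Real.log d ≤ 6 * x := by linarith
        have : 1 + Real.log d ≤ 6 * x := by linarith
        gcongr
    _ = 36 * (1 / (d:ℝ)^(3/2:ℝ)) := by
        have h2 : (d:ℝ)^2 = x * x * (d:ℝ)^(3/2:ℝ) := by
          rw [hx, ← Real.rpow_add (by linarith), ← Real.rpow_add (by linarith), ← Real.rpow_natCast]
          norm_num
        have hp : 0 < (d:ℝ)^(3/2:ℝ) := by positivity
        rw [div_mul_div_comm, ← sq (d:ℝ), h2]
        field_simp
        norm_num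

lemma T2_le (b : ℕ) (hb : 2 ≤ b) : ∃ C : ℝ, 0 ≤ C ∧ ∀ N R : ℕ, Par N R →
    ∑ q ∈ (Qs N).filter (fun q => b < q), ∑ p ∈ Pq b N q, hh b q p ≤ C * (N / Real.log N) := by
  classical
  obtain ⟨C, hC0, hC⟩ := order_sum b hb
  refine ⟨80 * C + 2, by positivity, ?_⟩
  intro N R h
  have hU := h.U_nonneg
  have hq1 : ∀ q ∈ (Qs N).filter (fun q => b < q), ∑ p ∈ Pq b N q, hh b q p ≤
      80 * (N / Real.log N) * ((1 + Real.log (orderOf (b : ZMod q))) / (q * (orderOf (b : ZMod q) : ℝ))) + 2 * (R:ℝ)^4 := by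
    intro q hq
    obtain ⟨hq, hbq⟩ := mem_filter.1 hq
    obtain ⟨h1, h2, h3⟩ := mem_Qs hq
    have := Fact.mk h1
    have hb0 : (b : ZMod q) ≠ 0 := by
      rw [Ne, ZMod.natCast_eq_zero_iff]
      exact Nat.not_dvd_of_pos_of_lt (by omega) hbq
    have hop : 1 ≤ orderOf (b : ZMod q) :=
      orderOf_pos_iff.2 (isOfFinOrder_iff_pow_eq_one.2 ⟨q-1, by have := h1.two_le; omega, ZMod.pow_card_sub_one_eq_one hb0⟩)
    have : ∑ p ∈ Pq b N q, hh b q p = (((Pq b N q).filter (fun p => (b : ZMod q)^p = b)).card : ℝ) := by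
      unfold hh
      rw [sum_boole]
    rw [this]
    apply count_one N R q _ h h2 hop
    intro p hp
    obtain ⟨hp, hpb⟩ := mem_filter.1 hp
    simp only [Pq, mem_filter, mem_Ioc] at hp
    refine ⟨hp.2.pos, hp.1.2, hp.2, ?_⟩
    have h4 : (b : ZMod q)^(p-1) = 1 := by
      have h5 : (b : ZMod q)^(p-1) * b = 1 * b := by
        rw [← pow_succ, Nat.sub_add_cancel hp.2.pos, hpb, one_mul]
      exact mul_right_cancel₀ hb0 h5
    exact ((Nat.modEq_iff_dvd' hp.2.pos).2 (orderOf_dvd_of_pow_eq_one h4)).symm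
  refine (sum_le_sum hq1).trans ?_
  rw [sum_add_distrib, ← mul_sum, sum_const, nsmul_eq_mul]
  have h5 := hC ((Qs N).filter (fun q => b < q)) (fun q hq => ⟨(mem_Qs (mem_filter.1 hq).1).1, (mem_filter.1 hq).2⟩)
  have h6 : (((Qs N).filter (fun q => b < q)).card : ℝ) ≤ (Nat.log 2 N : ℝ) := by
    have : (Qs N).filter (fun q => b < q) ⊆ Icc 1 (Nat.log 2 N) := (filter_subset _ _).trans (filter_subset _ _)
    have := card_le_card this
    rw [Nat.card_Icc, Nat.add_sub_cancel] at this
    exact_mod_cast this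
  have h7 := h.err 4 1 (by norm_num) (by norm_num)
  rw [pow_one] at h7
  calc _ ≤ 80 * (N / Real.log N) * C + (Nat.log 2 N : ℝ) * (2 * (R:ℝ)^4) := by gcongr
    _ ≤ _ := by linarith

lemma G_le (b N R : ℕ) (h : Par N R) (hb : 2 ≤ b) (K : ℕ → Finset ℕ) :
    |∑ q ∈ (Qs N).filter (fun q => b < q), ∑ p ∈ Pq b N q, gK b q (K q) p| ≤ 400 * (N / Real.log N) := by
  have hU := h.U_nonneg
  set U := (N:ℝ) / Real.log N with hUdef
  set L := Nat.log 2 N with hL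
  set Q := (Qs N).filter (fun q => b < q) with hQ
  have hQm : ∀ q ∈ Q, q.Prime ∧ 1 ≤ q ∧ q ≤ L ∧ b < q := by
    intro q hq
    obtain ⟨hq, hbq⟩ := mem_filter.1 hq
    obtain ⟨h1, h2, h3⟩ := mem_Qs hq
    exact ⟨h1, h2, h3, hbq⟩
  have hcard : (Q.card : ℝ) ≤ L := by
    have : Q ⊆ Icc 1 L := (filter_subset _ _).trans (filter_subset _ _)
    have := card_le_card this
    rw [Nat.card_Icc, Nat.add_sub_cancel] at this
    exact_mod_cast this
  set J : ℕ → Finset ℕ := fun q => (Ioc (max (b^q) R) (N/q)).filter Nat.Prime with hJ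
  have hsplit : ∀ q ∈ Q, ∑ p ∈ Pq b N q, gK b q (K q) p = ∑ p ∈ J q, gK b q (K q) p + ∑ p ∈ (Pq b N q).filter (fun p => ¬ R < p), gK b q (K q) p := by
    intro q _
    rw [← sum_filter_add_sum_filter_not (Pq b N q) (fun p => R < p)]
    congr 2
    ext p
    simp only [Pq, hJ, mem_filter, mem_Ioc, max_lt_iff]
    tauto
  rw [sum_congr rfl hsplit, sum_add_distrib]
  have hsmall : |∑ q ∈ Q, ∑ p ∈ (Pq b N q).filter (fun p => ¬ R < p), gK b q (K q) p| ≤ U := by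
    have he := h.err 1 1 (by norm_num) (by norm_num)
    rw [pow_one, pow_one] at he
    refine le_trans ?_ he
    calc _ ≤ ∑ q ∈ Q, ∑ p ∈ (Pq b N q).filter (fun p => ¬ R < p), |gK b q (K q) p| :=
          (abs_sum_le_sum_abs _ _).trans (sum_le_sum fun q _ => abs_sum_le_sum_abs _ _)
      _ ≤ ∑ q ∈ Q, (R:ℝ) := by
          refine sum_le_sum fun q hq => ?_
          calc _ ≤ ∑ p ∈ (Pq b N q).filter (fun p => ¬ R < p), (1:ℝ) :=
                sum_le_sum fun p _ => abs_gK_le b q (hQm q hq).1 _ p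
            _ = (((Pq b N q).filter (fun p => ¬ R < p)).card : ℝ) := by simp
            _ ≤ R := by
                have : (Pq b N q).filter (fun p => ¬ R < p) ⊆ Icc 1 R := by
                  intro p hp
                  simp only [Pq, mem_filter, mem_Ioc] at hp
                  have := hp.1.2.pos
                  rw [mem_Icc]; omega
                have := card_le_card this
                rw [Nat.card_Icc, Nat.add_sub_cancel] at this
                exact_mod_cast this
      _ = (Q.card : ℝ) * R := by rw [sum_const, nsmul_eq_mul]
      _ ≤ _ := by rw [mul_comm]; gcongr
  have hblock : ∀ i, |∑ q ∈ Q.filter (fun q => Nat.log 2 q = i), ∑ p ∈ J q, gK b q (K q) p| ≤ 83 * U * (3/4)^i := by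
    intro i
    set Qi := Q.filter (fun q => Nat.log 2 q = i) with hQi
    rcases Qi.eq_empty_or_nonempty with he | ⟨q0, hq0⟩
    · rw [he]; simp; positivity
    have hQim : ∀ q ∈ Qi, 2^i ≤ q ∧ q < 2^(i+1) := by
      intro q hq
      obtain ⟨h1, h2⟩ := mem_filter.1 hq
      rw [← h2]
      exact ⟨Nat.pow_log_le_self 2 (by have := (hQm q h1).2.1; omega), Nat.lt_pow_succ_log_self (by norm_num) q⟩
    have hiL : 2^i ≤ L := (hQim q0 hq0).1.trans (hQm q0 (mem_filter.1 hq0).1).2.2.1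
    have hiL' : (2:ℝ)^i ≤ L := by exact_mod_cast hiL
    have hci : (Qi.card : ℝ) ≤ 2^i := by
      have : Qi ⊆ Ico (2^i) (2^(i+1)) := fun q hq => mem_Ico.2 (hQim q hq)
      have := card_le_card this
      rw [Nat.card_Ico, pow_succ] at this
      have : Qi.card ≤ 2^i := by omega
      exact_mod_cast this
    have h2i : (0:ℝ) < 2^i := by positivity
    have hW : ∑ n ∈ Ioc 0 (N/2^i), sw R 1 n ≤ 81 * U / 2^i := by
      refine (sw_sum_le_one R (N/2^i) h.hR).trans ?_
      have a1 : ((N/2^i : ℕ) : ℝ) ≤ N / 2^i := by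
        have := Nat.cast_div_le (α := ℝ) (m := N) (n := 2^i)
        push_cast at this; exact this
      have a2 := h.two_div
      have a3 := h.err 4 1 (by norm_num) (by norm_num)
      have a4 : (R:ℝ)^4 ≤ U / 2^i := by
        rw [le_div_iff₀ h2i]
        refine le_trans ?_ a3
        rw [pow_one]; gcongr
      have h0 := h.hlog0
      have hlR : 0 ≤ 2 / Real.log R := by
        have := h.hlog
        have : 0 < Real.log R := by linarith
        positivity
      calc _ ≤ (N / 2^i : ℝ) * (80 / Real.log N) + U / 2^i := by gcongr
        _ = _ := by rw [hUdef]; ring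
    have hbl := block R L (N/2^i) b h.hR Qi (by
        intro q hq
        obtain ⟨a, b1, c, d⟩ := hQm q (mem_filter.1 hq).1
        exact ⟨a, Nat.not_dvd_of_pos_of_lt (by omega) d, c⟩)
      (fun q => max (b^q) R) (fun q => N/q) (fun q _ => le_max_right _ _)
      (fun q hq => Nat.div_le_div_left (hQim q hq).1 (by positivity)) K _ hW
    have he := h.err 6 6 (by norm_num) (by norm_num)
    have hfin : 81 * U / 2^i * ((Qi.card : ℝ) * (81 * U / 2^i) + (Qi.card : ℝ)^2 * (2 * (R:ℝ)^6 * L^4)) ≤ (83 * U * (3/4)^i)^2 := by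
      have b1 : (Qi.card : ℝ) * (81 * U / 2^i) ≤ 81 * U := by
        calc _ ≤ (2:ℝ)^i * (81 * U / 2^i) := by gcongr
          _ = _ := by field_simp
      have b2 : (Qi.card : ℝ)^2 * (2 * (R:ℝ)^6 * L^4) ≤ 2 * U := by
        calc _ ≤ (L:ℝ)^2 * (2 * (R:ℝ)^6 * L^4) := by gcongr; exact_mod_cast hci.trans hiL'
          _ = 2 * ((R:ℝ)^6 * L^6) := by ring
          _ ≤ _ := by gcongr
      have b3 : (1:ℝ) / 2^i ≤ ((3/4)^i)^2 := by
        rw [← pow_mul, mul_comm i 2, pow_mul, one_div, ← inv_pow]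
        gcongr
        norm_num
      calc _ ≤ 81 * U / 2^i * (81 * U + 2 * U) := by gcongr
        _ = (81 * 83 * U^2) * (1 / 2^i) := by ring
        _ ≤ (83 * 83 * U^2) * (((3/4)^i)^2) := by gcongr; norm_num
        _ = _ := by ring
    exact abs_le_of_sq_le_sq (hbl.trans hfin) (by positivity)
  have hmain : |∑ q ∈ Q, ∑ p ∈ J q, gK b q (K q) p| ≤ 332 * U := by
    rw [← sum_fiberwise_of_maps_to (s := Q) (t := range (L+1)) (g := fun q => Nat.log 2 q) (by
      intro q hq
      rw [mem_range]
      have := Nat.log_le_self 2 q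
      have := (hQm q hq).2.2.1
      omega)]
    calc _ ≤ ∑ i ∈ range (L+1), 83 * U * (3/4:ℝ)^i := (abs_sum_le_sum_abs _ _).trans (sum_le_sum fun i _ => hblock i)
      _ = 83 * U * ∑ i ∈ range (L+1), (3/4:ℝ)^i := by rw [mul_sum]
      _ ≤ 83 * U * 4 := by
          gcongr
          rw [geom_sum_eq (by norm_num)]
          have : (0:ℝ) ≤ (3/4)^(L+1) := by positivity
          rw [div_le_iff_of_neg (by norm_num)]
          linarith
      _ = _ := by ring
  refine (abs_add_le _ _).trans ?_
  linarith

lemma sV_le_prod (R : ℕ) : sV R 1 ≤ ∏ p ∈ (Icc 1 R).filter Nat.Prime, (1 + 1/(p:ℝ)) := by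
  classical
  rw [prod_one_add, sV]
  have hinj : Set.InjOn Nat.primeFactors (sqf R 1 : Set ℕ) := by
    intro a ha c hc h
    simp only [sqf, coe_filter, Set.mem_setOf_eq] at ha hc
    rw [← Nat.prod_primeFactors_of_squarefree ha.2.1, ← Nat.prod_primeFactors_of_squarefree hc.2.1, h]
  calc ∑ l ∈ sqf R 1, (1:ℝ)/l = ∑ l ∈ sqf R 1, ∏ p ∈ l.primeFactors, 1/(p:ℝ) := by
        refine sum_congr rfl fun l hl => ?_
        have hs : Squarefree l := (mem_filter.1 hl).2.1
        rw [prod_div_distrib, prod_const_one, ← Nat.cast_prod, Nat.prod_primeFactors_of_squarefree hs]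
    _ = ∑ t ∈ (sqf R 1).image Nat.primeFactors, ∏ p ∈ t, 1/(p:ℝ) := by
        rw [sum_image hinj]
    _ ≤ _ := by
        refine sum_le_sum_of_subset_of_nonneg ?_ (fun _ _ _ => by positivity)
        intro t ht
        obtain ⟨l, hl, rfl⟩ := mem_image.1 ht
        rw [mem_powerset]
        intro p hp
        have h1 := (mem_Icc.1 (mem_filter.1 hl).1)
        have hpp := Nat.prime_of_mem_primeFactors hp
        refine mem_filter.2 ⟨mem_Icc.2 ⟨hpp.one_le, (Nat.le_of_mem_primeFactors hp).trans h1.2⟩, hpp⟩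

lemma mertens_lower (Y : ℕ) (hY : 2 ≤ Y) :
    Real.log (Real.log Y / 2) ≤ ∑ q ∈ (Icc 1 Y).filter Nat.Prime, 1/(q:ℝ) := by
  have h0 : 0 < Real.log Y := Real.log_pos (by exact_mod_cast hY)
  rw [Real.log_le_iff_le_exp (by positivity)]
  have h1 := log_le_harm Y (by omega)
  have h2 := harm_le Y
  have h3 := sV_le_prod Y
  have h4 : ∏ p ∈ (Icc 1 Y).filter Nat.Prime, (1 + 1/(p:ℝ)) ≤ Real.exp (∑ q ∈ (Icc 1 Y).filter Nat.Prime, 1/(q:ℝ)) := by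
    rw [Real.exp_sum]
    refine prod_le_prod (fun _ _ => by positivity) fun p _ => ?_
    rw [add_comm]; exact Real.add_one_le_exp _
  linarith

lemma pi_lower : ∃ n₀ : ℕ, 2 ≤ n₀ ∧ ∀ n : ℕ, n₀ ≤ n → (n:ℝ) / 2 ≤ (Nat.primeCounting n) * Real.log n := by
  have h : ∀ᶠ x : ℝ in Filter.atTop, ‖Real.log x‖ ≤ (1/20) * ‖x‖ :=
    Real.isLittleO_log_id_atTop.bound (by norm_num)
  obtain ⟨a, ha⟩ := Filter.eventually_atTop.1 h
  refine ⟨max 2 ⌈a⌉₊, le_max_left _ _, fun n hn => ?_⟩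
  have hn2 : 2 ≤ n := (le_max_left _ _).trans hn
  have hna : a ≤ n := (Nat.le_ceil a).trans (by exact_mod_cast (le_max_right _ _).trans hn)
  have hn2' : (2:ℝ) ≤ n := by exact_mod_cast hn2
  have h1 := ha (n+1) (by linarith)
  have hl : 0 < Real.log n := Real.log_pos (by linarith)
  have h2 := Chebyshev.pi_ge n
  rw [div_le_iff₀ hl] at h2
  rw [Real.norm_of_nonneg (Real.log_nonneg (by linarith)), Real.norm_of_nonneg (by positivity)] at h1
  have := Real.log_two_gt_d9
  nlinarith

lemma Pq_lower (b : ℕ) (hb : 2 ≤ b) : ∃ N₀ : ℕ, ∀ N : ℕ, N₀ ≤ N → ∀ q : ℕ, q.Prime → q ≤ Nat.log b N / 4 →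
    (N / Real.log N) / 8 * (1/(q:ℝ)) ≤ ((Pq b N q).card : ℝ) := by
  obtain ⟨n₀, hn2, hpi⟩ := pi_lower
  have h : ∀ᶠ x : ℝ in Filter.atTop, ‖Real.log x‖ ≤ (1/8) * ‖x^(1/2:ℝ)‖ :=
    (isLittleO_log_rpow_atTop (by norm_num)).bound (by norm_num)
  obtain ⟨a, ha⟩ := Filter.eventually_atTop.1 h
  refine ⟨max (4 * n₀^2) ⌈a⌉₊, fun N hN q hq hqY => ?_⟩
  have hN1 : 4 * n₀^2 ≤ N := (le_max_left _ _).trans hN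
  have hna : a ≤ N := (Nat.le_ceil a).trans (by exact_mod_cast (le_max_right _ _).trans hN)
  have hN0 : 2 ≤ N := by nlinarith
  have hNr : (2:ℝ) ≤ N := by exact_mod_cast hN0
  have hl : 0 < Real.log N := Real.log_pos (by linarith)
  have h1 := ha N hna
  rw [Real.norm_of_nonneg hl.le, Real.norm_of_nonneg (by positivity), ← Real.sqrt_eq_rpow] at h1
  have hs2 : Real.sqrt N ^ 2 = N := Real.sq_sqrt (by positivity)
  have hs0 : 0 < Real.sqrt N := Real.sqrt_pos.2 (by linarith)
  have hbq4 : (b^q)^4 ≤ N := by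
    rw [← pow_mul]
    exact (Nat.pow_le_pow_right (by omega) (by omega)).trans (Nat.pow_log_le_self b (by omega))
  have hqb : q ≤ b^q := (Nat.lt_pow_self (by omega)).le
  have hbqr : ((b^q : ℕ):ℝ) * q ≤ Real.sqrt N := by
    apply Real.le_sqrt_of_sq_le
    have : (b^q*q)^2 ≤ N := by
      calc (b^q*q)^2 ≤ (b^q*b^q)^2 := by gcongr
        _ = (b^q)^4 := by ring
        _ ≤ N := hbq4
    exact_mod_cast this
  have hq2 : (2:ℝ) ≤ q := by exact_mod_cast hq.two_le
  have hbq1 : (1:ℝ) ≤ ((b^q : ℕ):ℝ) := by exact_mod_cast Nat.one_le_pow _ _ (by omega)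
  have hqs : (q:ℝ) ≤ Real.sqrt N := by nlinarith
  have hn0s : 2 * (n₀:ℝ) ≤ Real.sqrt N := by
    apply Real.le_sqrt_of_sq_le
    have : ((4 * n₀^2 : ℕ):ℝ) ≤ N := by exact_mod_cast hN1
    push_cast at this; nlinarith
  have hn02 : (2:ℝ) ≤ n₀ := by exact_mod_cast hn2
  -- n = N / q
  have hdiv : (N:ℝ)/q - 1 ≤ ((N/q : ℕ):ℝ) := by
    have := Nat.lt_floor_add_one ((N:ℝ)/q)
    rw [Nat.floor_div_eq_div] at this
    linarith
  have hNq : Real.sqrt N ≤ N / q := by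
    rw [le_div_iff₀ (by linarith)]; nlinarith
  have hn : (N:ℝ)/q/2 ≤ ((N/q : ℕ):ℝ) := by linarith
  have hnn : n₀ ≤ N/q := by
    have : (n₀:ℝ) ≤ ((N/q : ℕ):ℝ) := by linarith
    exact_mod_cast this
  have hp := hpi (N/q) hnn
  have hlog : Real.log ((N/q:ℕ):ℝ) ≤ Real.log N := by
    apply Real.log_le_log
    · exact_mod_cast (by omega : 0 < N/q)
    · exact_mod_cast Nat.div_le_self _ _
  have hcard : Nat.primeCounting (N/q) ≤ (Pq b N q).card + b^q := by
    rw [Nat.primeCounting, Nat.primeCounting', Nat.count_eq_card_filter_range]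
    have : (range (N/q+1)).filter Nat.Prime ⊆ Pq b N q ∪ Icc 1 (b^q) := by
      intro p hp
      simp only [mem_filter, mem_range, Pq, mem_union, mem_Ioc, mem_Icc] at hp ⊢
      have := hp.2.one_le
      by_cases h : b^q < p
      · left; exact ⟨⟨h, by omega⟩, hp.2⟩
      · right; omega
    refine (card_le_card this).trans ((card_union_le _ _).trans ?_)
    simp
  have hcr : (Nat.primeCounting (N/q) : ℝ) ≤ ((Pq b N q).card:ℝ) + ((b^q:ℕ):ℝ) := by exact_mod_cast hcard
  have hpos : (0:ℝ) ≤ Nat.primeCounting (N/q) := by positivity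
  have e1 : (N:ℝ)/q/4 ≤ (((Pq b N q).card:ℝ) + ((b^q:ℕ):ℝ)) * Real.log N := by
    calc (N:ℝ)/q/4 ≤ ((N/q : ℕ):ℝ)/2 := by linarith
      _ ≤ _ := hp
      _ ≤ Nat.primeCounting (N/q) * Real.log N := by gcongr
      _ ≤ _ := by gcongr
  have e2 : ((b^q:ℕ):ℝ) * Real.log N ≤ N/q/8 := by
    rw [div_div, le_div_iff₀ (by positivity)]
    calc ((b^q:ℕ):ℝ) * Real.log N * (q*8) = (((b^q:ℕ):ℝ) * q) * (8*Real.log N) := by ring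
      _ ≤ Real.sqrt N * Real.sqrt N := by gcongr; linarith
      _ = N := by nlinarith
  have e3 : (N:ℝ)/q/8 ≤ ((Pq b N q).card:ℝ) * Real.log N := by linarith
  calc _ = (N:ℝ)/q/8 / Real.log N := by field_simp
    _ ≤ _ := by rw [div_le_iff₀ hl]; exact e3

lemma Y_lower (b : ℕ) (hb : 2 ≤ b) : ∃ N₀ : ℕ, ∀ N : ℕ, N₀ ≤ N →
    1 ≤ Real.log (Real.log (Real.log N)) ∧ 2 ≤ Nat.log b N / 4 ∧
    Real.log (Real.log (Real.log N)) / 2 ≤ Real.log (Real.log ((Nat.log b N / 4 : ℕ):ℝ) / 2) := by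
  set B := Real.log b with hB
  have hb' : (2:ℝ) ≤ b := by exact_mod_cast hb
  have hB0 : 0 < B := Real.log_pos (by linarith)
  have t1 := Real.tendsto_log_atTop.comp (tendsto_natCast_atTop_atTop (R := ℝ))
  have t2 := Real.tendsto_log_atTop.comp t1
  have t3 := Real.tendsto_log_atTop.comp t2
  have e := ((t1.eventually_ge_atTop ((8*B+5)^2)).and (t2.eventually_ge_atTop 16)).and (t3.eventually_ge_atTop 1)
  obtain ⟨N₀, h⟩ := Filter.eventually_atTop.1 e
  refine ⟨max N₀ 2, fun N hN => ?_⟩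
  obtain ⟨⟨h1, h2⟩, h3⟩ := h N ((le_max_left _ _).trans hN)
  have hN2 : 2 ≤ N := (le_max_right _ _).trans hN
  simp only [Function.comp_apply] at h1 h2 h3
  set x := Real.sqrt (Real.log N) with hx
  have hlN : 0 < Real.log N := by nlinarith [sq_nonneg (8*B+5)]
  have hx2 : x^2 = Real.log N := Real.sq_sqrt hlN.le
  have hxB : 8*B+5 ≤ x := Real.le_sqrt_of_sq_le h1
  set M := Nat.log b N with hM
  have hM1 : Real.log N < (M+1) * B := by
    have : N < b^(M+1) := Nat.lt_pow_succ_log_self (by omega) N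
    have h' : (N:ℝ) < (b:ℝ)^(M+1) := by exact_mod_cast this
    have := Real.log_lt_log (by exact_mod_cast (by omega : 0 < N)) h'
    rw [Real.log_pow] at this
    push_cast at this; exact this
  have hM2 : 8 * x < M + 1 := by
    have : 8*x*B < (M+1)*B := by nlinarith
    exact lt_of_mul_lt_mul_right this hB0.le
  have hY : (M:ℝ) ≤ 4 * ((M/4:ℕ):ℝ) + 3 := by exact_mod_cast (by omega : M ≤ 4*(M/4)+3)
  have hYx : x ≤ ((M/4:ℕ):ℝ) := by linarith
  refine ⟨h3, ?_, ?_⟩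
  · have : (2:ℝ) ≤ ((M/4:ℕ):ℝ) := by linarith
    exact_mod_cast this
  set l2 := Real.log (Real.log N) with hl2
  have hx0 : 0 < x := by linarith
  have hlx : Real.log x = l2/2 := by rw [hx, Real.log_sqrt hlN.le]
  have hlY : l2/2 ≤ Real.log ((M/4:ℕ):ℝ) := hlx ▸ Real.log_le_log hx0 hYx
  have hsq : Real.sqrt l2 ≤ Real.log ((M/4:ℕ):ℝ) / 2 := by
    refine le_trans ?_ (by linarith : l2/4 ≤ _)
    rw [Real.sqrt_le_left (by linarith)]
    nlinarith
  rw [← Real.log_sqrt (by linarith)]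
  exact Real.log_le_log (Real.sqrt_pos.2 (by linarith)) hsq

lemma card_lower (b : ℕ) (hb : 2 ≤ b) : ∃ N₀ : ℕ, ∀ N : ℕ, N₀ ≤ N →
    1 ≤ Real.log (Real.log (Real.log N)) ∧
    (N / Real.log N) / 16 * Real.log (Real.log (Real.log N)) ≤ ((setAN b N).card : ℝ) := by
  obtain ⟨N1, h1⟩ := Pq_lower b hb
  obtain ⟨N2, h2⟩ := Y_lower b hb
  refine ⟨max N1 N2, fun N hN => ?_⟩
  obtain ⟨h3, hY, hlog⟩ := h2 N ((le_max_right _ _).trans hN)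
  have h1 := h1 N ((le_max_left _ _).trans hN)
  refine ⟨h3, ?_⟩
  have hU : (0:ℝ) ≤ N / Real.log N := div_nonneg (by positivity) (Real.log_natCast_nonneg N)
  have hm := mertens_lower _ hY
  rw [setAN_card b N hb]
  push_cast
  have hsub : (Icc 1 (Nat.log b N / 4)).filter Nat.Prime ⊆ Qs N := by
    intro q hq
    simp only [Qs, mem_filter, mem_Icc] at hq ⊢
    have : Nat.log b N ≤ Nat.log 2 N := Nat.log_anti_left (by norm_num) hb
    refine ⟨⟨hq.1.1, ?_⟩, hq.2⟩
    omega
  calc (N / Real.log N) / 16 * Real.log (Real.log (Real.log N))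
      = (N / Real.log N) / 8 * (Real.log (Real.log (Real.log N)) / 2) := by ring
    _ ≤ (N / Real.log N) / 8 * ∑ q ∈ (Icc 1 (Nat.log b N / 4)).filter Nat.Prime, 1/(q:ℝ) := by
        gcongr; exact hlog.trans hm
    _ = ∑ q ∈ (Icc 1 (Nat.log b N / 4)).filter Nat.Prime, (N / Real.log N) / 8 * (1/(q:ℝ)) := by
        rw [mul_sum]
    _ ≤ ∑ q ∈ (Icc 1 (Nat.log b N / 4)).filter Nat.Prime, ((Pq b N q).card : ℝ) := by
        refine sum_le_sum fun q hq => ?_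
        simp only [mem_filter, mem_Icc] at hq
        exact h1 q hq.2 hq.1.2
    _ ≤ _ := sum_le_sum_of_subset_of_nonneg hsub (fun _ _ _ => by positivity)

lemma exists_par : ∃ N₀ : ℕ, ∀ N : ℕ, N₀ ≤ N → ∃ R : ℕ, Par N R := by
  have h : ∀ᶠ x : ℝ in Filter.atTop, ‖Real.log x‖ ≤ (1/2) * ‖x^(1/20:ℝ)‖ :=
    (isLittleO_log_rpow_atTop (by norm_num)).bound (by norm_num)
  have t := tendsto_rpow_atTop (by norm_num : (0:ℝ) < 1/20)
  obtain ⟨a, ha⟩ := Filter.eventually_atTop.1 (h.and (t.eventually_ge_atTop 4))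
  refine ⟨max 2 ⌈a⌉₊, fun N hN => ?_⟩
  have hN2 : 2 ≤ N := (le_max_left _ _).trans hN
  have hna : a ≤ N := (Nat.le_ceil a).trans (by exact_mod_cast (le_max_right _ _).trans hN)
  obtain ⟨h1, h4⟩ := ha N hna
  have hNr : (2:ℝ) ≤ N := by exact_mod_cast hN2
  have hl : 0 < Real.log N := Real.log_pos (by linarith)
  set x := (N:ℝ)^(1/20:ℝ) with hx
  have hx0 : 0 ≤ x := by positivity
  rw [Real.norm_of_nonneg hl.le, Real.norm_of_nonneg hx0] at h1
  have hx20 : x^20 = N := by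
    rw [hx, ← Real.rpow_natCast, ← Real.rpow_mul (by positivity)]; norm_num
  have hlx : Real.log N = 20 * Real.log x := by
    rw [← hx20, Real.log_pow]; norm_num
  have hRle : ((⌊x⌋₊ : ℕ):ℝ) ≤ x := Nat.floor_le hx0
  have hRge : x < (⌊x⌋₊ : ℕ) + 1 := Nat.lt_floor_add_one x
  have hL : ((Nat.log 2 N : ℕ):ℝ) ≤ x := by
    have : 2^(Nat.log 2 N) ≤ N := Nat.pow_log_le_self 2 (by omega)
    have h' : (2:ℝ)^(Nat.log 2 N) ≤ N := by exact_mod_cast this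
    have := Real.log_le_log (by positivity) h'
    rw [Real.log_pow] at this
    have h2 := Real.log_two_gt_d9
    have : (0:ℝ) ≤ (Nat.log 2 N : ℕ) := by positivity
    nlinarith
  refine ⟨⌊x⌋₊, ?_, hl, ?_, Nat.log_pos (by norm_num) hN2, ?_⟩
  · exact Nat.le_floor (by push_cast; linarith)
  · have hR : Real.sqrt x ≤ (⌊x⌋₊ : ℕ) := by
      refine le_trans ?_ (by linarith : x/2 ≤ _)
      rw [Real.sqrt_le_left (by linarith)]
      nlinarith
    have := Real.log_le_log (Real.sqrt_pos.2 (by linarith)) hR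
    rw [Real.log_sqrt hx0] at this
    linarith
  · rw [le_div_iff₀ hl]
    calc ((⌊x⌋₊ : ℕ):ℝ)^8 * ((Nat.log 2 N : ℕ):ℝ)^10 * Real.log N ≤ x^8 * x^10 * x := by
          gcongr; linarith
      _ = x^19 := by ring
      _ ≤ x^20 := pow_le_pow_right₀ (by linarith) (by norm_num)
      _ = N := hx20

theorem stmt_17' (b : ℕ) (hb : 2 ≤ b) :
    ∃ C : ℝ, 0 < C ∧ ∃ N₀ : ℕ, ∀ N : ℕ, N₀ ≤ N →
      starDiscOn (setAN b N) (fun n => ((b ^ n % n : ℕ) : ℝ) / n) ≤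
        C / Real.log (Real.log (Real.log N)) := by
  obtain ⟨N1, h1⟩ := exists_par
  obtain ⟨N2, h2⟩ := card_lower b hb
  obtain ⟨C2, hC2, hT2⟩ := T2_le b hb
  refine ⟨16 * (400 + 328 + C2 + 82 * b), by positivity, max N1 N2, fun N hN => ?_⟩
  obtain ⟨R, hR⟩ := h1 N ((le_max_left _ _).trans hN)
  obtain ⟨h3, hc⟩ := h2 N ((le_max_right _ _).trans hN)
  have hN0 : (0:ℝ) < N := by
    rcases Nat.eq_zero_or_pos N with h | h
    · have := hR.hlog0; simp [h] at this
    · exact_mod_cast h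
  have hU : 0 < (N:ℝ) / Real.log N := div_pos hN0 hR.hlog0
  have hT : (0:ℝ) < (setAN b N).card := lt_of_lt_of_le (by positivity) hc
  have : Nonempty (Set.Ioc (0:ℝ) 1) := ⟨⟨1, by norm_num⟩⟩
  unfold starDiscOn
  refine ciSup_le fun r => ?_
  have hm := main_error b N hb r r.2.1 r.2.2 _ _ _ _ (fun K => G_le b N R hR hb K) (T1_le b N R hR) (hT2 N R hR) (T3_le b N R hR)
  set F : ℝ := (((setAN b N).filter fun n => ((b ^ n % n : ℕ) : ℝ) / n ≤ (r:ℝ)).card : ℝ) with hF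
  have key : |F / (setAN b N).card - r| ≤ 16 * (400 + 328 + C2 + 82 * b) / Real.log (Real.log (Real.log N)) := by
    have e : F / (setAN b N).card - r = (F - r * (setAN b N).card) / (setAN b N).card := by
      field_simp
    rw [e, abs_div, abs_of_pos hT, div_le_div_iff₀ hT (by linarith)]
    calc _ ≤ ((400 + 328 + C2 + 82 * b) * (N / Real.log N)) * Real.log (Real.log (Real.log N)) := by
          gcongr; refine hm.trans (le_of_eq (by ring))
      _ = 16 * (400 + 328 + C2 + 82 * b) * ((N / Real.log N) / 16 * Real.log (Real.log (Real.log N))) := by ring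
      _ ≤ _ := by gcongr
  convert key using 6

end Helpers

theorem stmt_17 (b : ℕ) (hb : 2 ≤ b) :
    ∃ C : ℝ, 0 < C ∧ ∃ N₀ : ℕ, ∀ N : ℕ, N₀ ≤ N →
      starDiscOn (setAN b N) (fun n => ((b ^ n % n : ℕ) : ℝ) / n) ≤
        C / Real.log (Real.log (Real.log N)) := stmt_17' b hb
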